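/- Let κ > 1 and let X = (X_1,...,X_n) be an unconditional, isotropic random vector in ℝⁿ with density e^{-u(x)}, where the function (x_1,...,x_n) ↦ u(x_1^κ,...,x_n^κ) is convex on the positive orthant ℝⁿ₊. Let G be a standard Gaussian random variable and θ ∈ S^{n-1}. Then |P(θ·X ≥ t) − P(G ≥ t)| ≤ C_κ Σ_{k=1}^n |θ_k|³ for every t ∈ ℝ, where C_κ > 0 depends only on κ and not on n. -/

import Mathlib

open MeasureTheory ProbabilityTheory Real

/-!
The law of `(|X₁|, …, |Xₙ|)` satisfies a Prékopa–Leindler inequality in the variables `xᵢ = aᵢ^κ`,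
and for `κ > 1` the Jacobians of this substitution contribute a gain over log-concavity. Linearizing
the inequality turns the gain into a variance bound `Var ∑ θᵢ² Xᵢ² ≤ C_κ ∑ θᵢ⁴`, and its
one-dimensional marginals bound the fourth moments.

Conditionally on the `|Xᵢ|`, the sum `∑ θᵢ Xᵢ` is a Rademacher sum, to which Stein's method applies:
its tail is that of a Gaussian of variance `V = ∑ θᵢ² Xᵢ²` up to third moments. Expanding this
Gaussian tail to second order around `V = 1`, the linear term has mean zero by isotropy, and the
quadratic error is controlled by `Var V`.
-/

namespace UnconditionalCLT

open Set

section PrekopaLeindler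

open scoped Pointwise ENNReal

lemma volume_add_volume_le_of_isCompact {K L : Set ℝ} (hK : IsCompact K) (hL : IsCompact L)
    (hKne : K.Nonempty) (hLne : L.Nonempty) : volume K + volume L ≤ volume (K + L) := by
  obtain ⟨x, hx, hxmax⟩ := hK.exists_isGreatest hKne
  obtain ⟨y, hy, hymin⟩ := hL.exists_isLeast hLne
  -- `K + min L` and `max K + L` lie in `K + L` and meet in at most the point `max K + min L`.
  have hdisj : AEDisjoint volume (y +ᵥ K) (x +ᵥ L) := by
    refine measure_mono_null (t := {x + y}) ?_ (measure_singleton _)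
    rintro _ ⟨⟨k, hk, rfl⟩, l, hl, hkl⟩
    have := hxmax hk
    have := hymin hl
    simp only [vadd_eq_add] at hkl ⊢
    rw [mem_singleton_iff]
    linarith
  have hmeas : MeasurableSet (x +ᵥ L) := hL.measurableSet.const_vadd x
  calc volume K + volume L = volume ((y +ᵥ K) ∪ (x +ᵥ L)) := by
        rw [measure_union₀ hmeas.nullMeasurableSet hdisj, measure_vadd, measure_vadd]
    _ ≤ volume (K + L) := by
        refine measure_mono (union_subset ?_ (vadd_set_subset_add hx))
        rw [add_comm K L]
        exact vadd_set_subset_add hy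

lemma volume_add_volume_le {A B : Set ℝ} (hA : MeasurableSet A) (hB : MeasurableSet B)
    (hAne : A.Nonempty) (hBne : B.Nonempty) : volume A + volume B ≤ volume (A + B) := by
  obtain ⟨a, ha⟩ := hAne
  obtain ⟨b, hb⟩ := hBne
  rw [hA.measure_eq_iSup_isCompact, hB.measure_eq_iSup_isCompact]
  simp only [iSup_and']
  refine ENNReal.biSup_add_biSup_le' ⟨∅, by simp⟩ ⟨∅, by simp⟩ fun K hK L hL ↦ ?_
  calc volume K + volume L ≤ volume (insert a K) + volume (insert b L) := by
        gcongr <;> exact subset_insert _ _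
    _ ≤ volume (insert a K + insert b L) :=
        volume_add_volume_le_of_isCompact (hK.2.insert a) (hL.2.insert b)
          (insert_nonempty a K) (insert_nonempty b L)
    _ ≤ volume (A + B) :=
        measure_mono (add_subset_add (insert_subset ha hK.1) (insert_subset hb hL.1))

lemma lintegral_eq_lintegral_meas_ofReal_lt {α : Type*} [MeasurableSpace α] (μ : Measure α)
    {f : α → ℝ≥0∞} (hf : Measurable f) (hfin : ∀ x, f x ≠ ∞) :
    ∫⁻ x, f x ∂μ = ∫⁻ t in Ioi (0 : ℝ), μ {x | ENNReal.ofReal t < f x} := by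
  calc ∫⁻ x, f x ∂μ = ∫⁻ x, ENNReal.ofReal (f x).toReal ∂μ :=
        lintegral_congr fun x ↦ (ENNReal.ofReal_toReal (hfin x)).symm
    _ = ∫⁻ t in Ioi (0 : ℝ), μ {x | t < (f x).toReal} :=
        lintegral_eq_lintegral_meas_lt μ (ae_of_all _ fun _ ↦ ENNReal.toReal_nonneg)
          hf.ennreal_toReal.aemeasurable
    _ = ∫⁻ t in Ioi (0 : ℝ), μ {x | ENNReal.ofReal t < f x} := by
        refine setLIntegral_congr_fun measurableSet_Ioi fun t ht ↦ ?_
        simp only [ENNReal.ofReal_lt_iff_lt_toReal (le_of_lt ht) (hfin _)]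

lemma measurable_meas_ofReal_lt {α : Type*} [MeasurableSpace α] (μ : Measure α) (f : α → ℝ≥0∞) :
    Measurable fun t : ℝ ↦ μ {x | ENNReal.ofReal t < f x} :=
  Antitone.measurable fun _ _ hst ↦
    measure_mono fun _ hx ↦ (ENNReal.ofReal_le_ofReal hst).trans_lt hx

variable {f g h : ℝ → ℝ≥0∞}

-- Super-level sets of the truncation `min h S` contain the midpoints of those of `f` and `g`.
lemma volume_lt_add_volume_lt_le (hf : Measurable f) (hg : Measurable g)
    (hsup : ⨆ x, f x = ⨆ x, g x) (H : ∀ x y, f x * g y ≤ h ((x + y) / 2) ^ 2) (r : ℝ≥0∞) :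
    volume {x | r < f x} + volume {x | r < g x} ≤ 2 * volume {x | r < min (h x) (⨆ y, f y)} := by
  rcases le_or_gt (⨆ y, f y) r with hSr | hrS
  · simp [((le_iSup f _).trans hSr).not_gt, ((hsup ▸ le_iSup g _).trans hSr).not_gt]
  have hmid : {x | r < f x} + {x | r < g x} ⊆ (2 : ℝ) • {x | r < min (h x) (⨆ y, f y)} := by
    rintro _ ⟨x, hx, y, hy, rfl⟩
    refine ⟨(x + y) / 2, lt_min (lt_of_not_ge fun hle ↦ ?_) hrS, by simp only [smul_eq_mul]; ring⟩
    have hlt := (ENNReal.mul_lt_mul hx hy).trans_le (H x y)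
    rw [← sq] at hlt
    exact hlt.not_ge (pow_le_pow_left₀ zero_le hle 2)
  calc volume {x | r < f x} + volume {x | r < g x}
      ≤ volume ({x | r < f x} + {x | r < g x}) :=
        volume_add_volume_le (measurableSet_lt measurable_const hf)
          (measurableSet_lt measurable_const hg) (lt_iSup_iff.mp hrS)
          (lt_iSup_iff.mp (hrS.trans_eq hsup))
    _ ≤ volume ((2 : ℝ) • {x | r < min (h x) (⨆ y, f y)}) := measure_mono hmid
    _ = 2 * volume {x | r < min (h x) (⨆ y, f y)} := by
        rw [Measure.addHaar_smul]; norm_num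

lemma lintegral_add_lintegral_le_of_iSup_eq (hf : Measurable f) (hg : Measurable g)
    (hh : Measurable h) (hsup : ⨆ x, f x = ⨆ x, g x) (hfin : ⨆ x, f x ≠ ∞)
    (H : ∀ x y, f x * g y ≤ h ((x + y) / 2) ^ 2) :
    (∫⁻ x, f x) + ∫⁻ x, g x ≤ 2 * ∫⁻ x, h x := by
  set S := ⨆ x, f x
  have hf_top : ∀ x, f x ≠ ∞ := fun x ↦ ne_top_of_le_ne_top hfin (le_iSup f x)
  have hg_top : ∀ x, g x ≠ ∞ := fun x ↦ ne_top_of_le_ne_top (hsup ▸ hfin) (le_iSup g x)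
  calc (∫⁻ x, f x) + ∫⁻ x, g x
      = ∫⁻ t in Ioi (0 : ℝ), (volume {x | ENNReal.ofReal t < f x}
          + volume {x | ENNReal.ofReal t < g x}) := by
        rw [lintegral_eq_lintegral_meas_ofReal_lt _ hf hf_top,
          lintegral_eq_lintegral_meas_ofReal_lt _ hg hg_top,
          lintegral_add_left (measurable_meas_ofReal_lt _ f)]
    _ ≤ ∫⁻ t in Ioi (0 : ℝ), 2 * volume {x | ENNReal.ofReal t < min (h x) S} :=
        lintegral_mono fun t ↦ volume_lt_add_volume_lt_le hf hg hsup H (ENNReal.ofReal t)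
    _ = 2 * ∫⁻ x, min (h x) S := by
        rw [lintegral_const_mul _ (measurable_meas_ofReal_lt _ _),
          lintegral_eq_lintegral_meas_ofReal_lt _ (hh.min measurable_const)
            fun x ↦ ne_top_of_le_ne_top hfin (min_le_right _ _)]
    _ ≤ 2 * ∫⁻ x, h x := by gcongr; exact min_le_left _ _

lemma four_mul_le_sq_add_ennreal (a b : ℝ≥0∞) : 4 * (a * b) ≤ (a + b) ^ 2 := by
  rcases eq_or_ne a ∞ with rfl | ha
  · simp
  rcases eq_or_ne b ∞ with rfl | hb
  · simp
  lift a to NNReal using ha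
  lift b to NNReal using hb
  rw [← mul_assoc]
  exact_mod_cast four_mul_le_sq_add a b

lemma lintegral_mul_lintegral_le_sq_of_iSup_ne_top (hf : Measurable f) (hg : Measurable g)
    (hh : Measurable h) (hfsup : ⨆ x, f x ≠ ∞) (hgsup : ⨆ x, g x ≠ ∞)
    (H : ∀ x y, f x * g y ≤ h ((x + y) / 2) ^ 2) :
    (∫⁻ x, f x) * ∫⁻ x, g x ≤ (∫⁻ x, h x) ^ 2 := by
  rcases eq_or_ne (⨆ x, f x) 0 with hf0 | hf0
  · simp [ENNReal.iSup_eq_zero.mp hf0]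
  rcases eq_or_ne (⨆ x, g x) 0 with hg0 | hg0
  · simp [ENNReal.iSup_eq_zero.mp hg0]
  -- Rescaling `f` by `c` and `g` by `c⁻¹` equalizes the suprema.
  obtain ⟨c, hc0, hctop, hc⟩ : ∃ c : ℝ≥0∞, c ≠ 0 ∧ c ≠ ∞ ∧ c * ⨆ x, f x = c⁻¹ * ⨆ x, g x := by
    lift (⨆ x, f x) to NNReal using hfsup with A
    lift (⨆ x, g x) to NNReal using hgsup with B
    rw [ENNReal.coe_ne_zero] at hf0 hg0
    have hroot : NNReal.sqrt (B / A) ≠ 0 := by simp [hf0, hg0]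
    refine ⟨NNReal.sqrt (B / A), by exact_mod_cast hroot, ENNReal.coe_ne_top, ?_⟩
    rw [← ENNReal.coe_inv hroot]
    norm_cast
    rw [eq_inv_mul_iff_mul_eq₀ hroot, ← mul_assoc, NNReal.mul_self_sqrt, div_mul_cancel₀ _ hf0]
  have hcc : c * c⁻¹ = 1 := ENNReal.mul_inv_cancel hc0 hctop
  have hsum : (∫⁻ x, c * f x) + ∫⁻ x, c⁻¹ * g x ≤ 2 * ∫⁻ x, h x := by
    refine lintegral_add_lintegral_le_of_iSup_eq (hf.const_mul c) (hg.const_mul c⁻¹) hh ?_ ?_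
      fun x y ↦ ?_
    · rw [← ENNReal.mul_iSup, ← ENNReal.mul_iSup, hc]
    · rw [← ENNReal.mul_iSup]
      exact ENNReal.mul_ne_top hctop hfsup
    · rw [mul_mul_mul_comm, hcc, one_mul]
      exact H x y
  rw [lintegral_const_mul _ hf, lintegral_const_mul _ hg] at hsum
  refine (ENNReal.mul_le_mul_iff_right four_ne_zero ENNReal.ofNat_ne_top).mp ?_
  calc 4 * ((∫⁻ x, f x) * ∫⁻ x, g x) = 4 * ((c * ∫⁻ x, f x) * (c⁻¹ * ∫⁻ x, g x)) := by
        rw [mul_mul_mul_comm, hcc, one_mul]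
    _ ≤ ((c * ∫⁻ x, f x) + c⁻¹ * ∫⁻ x, g x) ^ 2 := four_mul_le_sq_add_ennreal _ _
    _ ≤ (2 * ∫⁻ x, h x) ^ 2 := by gcongr
    _ = 4 * (∫⁻ x, h x) ^ 2 := by ring

lemma lintegral_eq_iSup_lintegral_min_natCast {α : Type*} [MeasurableSpace α] (μ : Measure α)
    {f : α → ℝ≥0∞} (hf : Measurable f) :
    ∫⁻ x, f x ∂μ = ⨆ m : ℕ, ∫⁻ x, min (f x) m ∂μ := by
  rw [← lintegral_iSup (fun m ↦ hf.min measurable_const)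
    fun _ _ hm _ ↦ min_le_min le_rfl (Nat.cast_le.mpr hm)]
  simp_rw [← inf_iSup_eq, ENNReal.iSup_natCast, inf_top_eq]

theorem prekopa_leindler_midpoint (hf : Measurable f) (hg : Measurable g) (hh : Measurable h)
    (H : ∀ x y, f x * g y ≤ h ((x + y) / 2) ^ 2) :
    (∫⁻ x, f x) * ∫⁻ x, g x ≤ (∫⁻ x, h x) ^ 2 := by
  have hsup : ∀ (k : ℝ → ℝ≥0∞) (m : ℕ), ⨆ x, min (k x) m ≠ ∞ := fun k m ↦
    ne_top_of_le_ne_top (ENNReal.natCast_ne_top m) (iSup_le fun _ ↦ min_le_right _ _)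
  rw [lintegral_eq_iSup_lintegral_min_natCast _ hf, lintegral_eq_iSup_lintegral_min_natCast _ hg]
  simp_rw [ENNReal.iSup_mul, ENNReal.mul_iSup]
  refine iSup₂_le fun m m' ↦ ?_
  refine lintegral_mul_lintegral_le_sq_of_iSup_ne_top (hf.min measurable_const)
    (hg.min measurable_const) hh (hsup f m) (hsup g m') fun x y ↦ ?_
  exact (mul_le_mul' (min_le_left _ _) (min_le_left _ _)).trans (H x y)

end PrekopaLeindler

section Tensorization

open scoped ENNReal

/-- A weighted Prékopa–Leindler inequality for the measure `ν`: points of `E` are parametrized by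
`φ` on the set `s`, midpoints are taken by `m` in the parameter space, and the pointwise hypothesis
is allowed the extra factor `w`. -/
def PrekopaLeindler {α E : Type*} [MeasurableSpace E] (ν : Measure E) (s : Set α) (φ : α → E)
    (m : α → α → α) (w : α → α → ℝ≥0∞) : Prop :=
  ∀ ⦃f g h : E → ℝ≥0∞⦄, Measurable f → Measurable g → Measurable h →
    (∀ a ∈ s, ∀ b ∈ s, f (φ a) * g (φ b) ≤ (w a b * h (φ (m a b))) ^ 2) →
    (∫⁻ x, f x ∂ν) * ∫⁻ x, g x ∂ν ≤ (∫⁻ x, h x ∂ν) ^ 2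

variable {α E : Type*} [MeasurableSpace E]

lemma measurable_finCons (n : ℕ) :
    Measurable fun p : E × (Fin n → E) ↦ (Fin.cons p.1 p.2 : Fin (n + 1) → E) := by
  refine measurable_pi_iff.mpr (Fin.cases ?_ fun j ↦ ?_)
  · simpa using measurable_fst
  · exact (measurable_pi_apply j).comp measurable_snd

lemma lintegral_pi_succ (ν : Measure E) [SigmaFinite ν] {n : ℕ} {f : (Fin (n + 1) → E) → ℝ≥0∞}
    (hf : Measurable f) :
    ∫⁻ x, f x ∂(Measure.pi fun _ ↦ ν)
      = ∫⁻ s, ∫⁻ x, f (Fin.cons s x) ∂(Measure.pi fun _ : Fin n ↦ ν) ∂ν := by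
  have hcons := (measurePreserving_piFinSuccAbove (fun _ : Fin (n + 1) ↦ ν) 0).symm
  rw [← hcons.lintegral_comp hf, lintegral_prod]
  · simp [MeasurableEquiv.piFinSuccAbove, Fin.consEquiv]
  · exact (hf.comp (MeasurableEquiv.measurable _)).aemeasurable

lemma fin_cons_comp {β : Type*} (φ : α → β) {n : ℕ} (c : α) (x : Fin n → α) :
    (fun i ↦ φ ((Fin.cons c x : Fin (n + 1) → α) i)) = Fin.cons (φ c) fun i ↦ φ (x i) :=
  Fin.comp_cons φ c x

theorem PrekopaLeindler.pi {ν : Measure E} [SigmaFinite ν] {s : Set α} {φ : α → E}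
    {m : α → α → α} {w : α → α → ℝ≥0∞} (hν : PrekopaLeindler ν s φ m w) (n : ℕ) :
    PrekopaLeindler (Measure.pi fun _ : Fin n ↦ ν) (univ.pi fun _ ↦ s) (fun a i ↦ φ (a i))
      (fun a b i ↦ m (a i) (b i)) (fun a b ↦ ∏ i, w (a i) (b i)) := by
  induction n with
  | zero =>
    intro f g h _ _ _ H
    have hconst : ∀ (k : (Fin 0 → E) → ℝ≥0∞) (v : Fin 0 → E),
        ∫⁻ x, k x ∂(Measure.pi fun _ : Fin 0 ↦ ν) = k v := fun k v ↦ by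
      rw [Measure.pi_of_empty _ v, lintegral_dirac]
    rw [hconst f (fun i ↦ i.elim0), hconst g (fun i ↦ i.elim0), hconst h (fun i ↦ i.elim0)]
    convert H (fun i ↦ i.elim0) (fun i ↦ i.elim0) (fun i ↦ i.elim0) (fun i ↦ i.elim0) using 2
    · congr!
    · congr!
    · simp only [Finset.univ_eq_empty, Finset.prod_empty, one_mul]
      congr!
  | succ n ih =>
    intro f g h hf hg hh H
    have hsection : ∀ {k : (Fin (n + 1) → E) → ℝ≥0∞}, Measurable k → ∀ c : E,
        Measurable fun x : Fin n → E ↦ k (Fin.cons c x) := fun hk c ↦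
      hk.comp ((measurable_finCons n).comp measurable_prodMk_left)
    have hmarginal : ∀ {k : (Fin (n + 1) → E) → ℝ≥0∞}, Measurable k →
        Measurable fun c : E ↦ ∫⁻ x, k (Fin.cons c x) ∂(Measure.pi fun _ : Fin n ↦ ν) := fun hk ↦
      Measurable.lintegral_prod_right' (hk.comp (measurable_finCons n))
    rw [lintegral_pi_succ ν hf, lintegral_pi_succ ν hg, lintegral_pi_succ ν hh]
    refine hν (hmarginal hf) (hmarginal hg) (hmarginal hh) fun a ha b hb ↦ ?_
    rw [← lintegral_const_mul _ (hsection hh _)]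
    refine ih (hsection hf _) (hsection hg _) ((hsection hh _).const_mul _) fun x hx y hy ↦ ?_
    have hcons := H (Fin.cons a x) (by simpa [Fin.forall_fin_succ] using ⟨ha, by simpa using hx⟩)
      (Fin.cons b y) (by simpa [Fin.forall_fin_succ] using ⟨hb, by simpa using hy⟩)
    have hmid : (fun i ↦ φ (m ((Fin.cons a x : Fin (n + 1) → α) i) ((Fin.cons b y :
        Fin (n + 1) → α) i))) = Fin.cons (φ (m a b)) fun i ↦ φ (m (x i) (y i)) := by
      funext i
      cases i using Fin.cases <;> rfl
    beta_reduce at hcons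
    rw [fin_cons_comp, fin_cons_comp, hmid, Fin.prod_univ_succ] at hcons
    simp only [Fin.cons_zero, Fin.cons_succ] at hcons
    exact hcons.trans_eq (by ring)

end Tensorization

section PowerSubstitution

open scoped ENNReal

/-- The open positive orthant of `ℝⁿ`. -/
def orthant (n : ℕ) : Set (Fin n → ℝ) := univ.pi fun _ ↦ Ioi 0

/-- The square root of the Jacobian ratio `J((a + b) / 2)² / (J a * J b)` of the substitution
`x = a ^ κ`, `J a = κ * a ^ (κ - 1)`. It is the gain, for `κ > 1`, in the Prékopa–Leindler
inequality written in the variable `a`. -/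
noncomputable def jacobianGain (κ a b : ℝ) : ℝ := (((a + b) / 2) ^ 2 / (a * b)) ^ ((κ - 1) / 2)

variable {κ a b : ℝ}

lemma jacobianGain_nonneg (ha : 0 < a) (hb : 0 < b) : 0 ≤ jacobianGain κ a b :=
  rpow_nonneg (by positivity) _

lemma jacobianGain_sq_mul (ha : 0 < a) (hb : 0 < b) :
    jacobianGain κ a b ^ 2 * (a ^ (κ - 1) * b ^ (κ - 1)) = (((a + b) / 2) ^ (κ - 1)) ^ 2 := by
  have hgain : jacobianGain κ a b ^ 2 = (((a + b) / 2) ^ 2 / (a * b)) ^ (κ - 1) := by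
    rw [jacobianGain, ← rpow_mul_natCast (by positivity)]
    congr 1
    push_cast
    ring
  rw [hgain, ← mul_rpow ha.le hb.le, ← mul_rpow (by positivity) (by positivity),
    div_mul_cancel₀ _ (by positivity), rpow_pow_comm (by positivity)]

lemma image_rpow_Ioi_zero (hκ : κ ≠ 0) : (fun x : ℝ ↦ x ^ κ) '' Ioi 0 = Ioi 0 := by
  refine Subset.antisymm (image_subset_iff.mpr fun x hx ↦ rpow_pos_of_pos hx κ) fun y hy ↦ ?_
  exact ⟨y ^ κ⁻¹, rpow_pos_of_pos hy _, rpow_inv_rpow (le_of_lt hy) hκ⟩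

lemma setLIntegral_Ioi_comp_rpow (hκ : 0 < κ) (f : ℝ → ℝ≥0∞) :
    ∫⁻ x in Ioi (0 : ℝ), f x
      = ∫⁻ x in Ioi (0 : ℝ), ENNReal.ofReal (κ * x ^ (κ - 1)) * f (x ^ κ) := by
  have hsubst := lintegral_image_eq_lintegral_abs_deriv_mul measurableSet_Ioi
    (fun x (hx : x ∈ Ioi (0 : ℝ)) ↦
      (hasDerivAt_rpow_const (p := κ) (Or.inl (ne_of_gt hx))).hasDerivWithinAt)
    (fun x hx y hy ↦ (rpow_left_inj (le_of_lt hx) (le_of_lt hy) hκ.ne').mp) f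
  rw [image_rpow_Ioi_zero hκ.ne'] at hsubst
  rw [hsubst]
  refine setLIntegral_congr_fun measurableSet_Ioi fun x hx ↦ ?_
  simp only [abs_of_nonneg (mul_nonneg hκ.le (rpow_nonneg (le_of_lt hx) (κ - 1)))]

theorem prekopaLeindler_rpow (hκ : 0 < κ) :
    PrekopaLeindler (volume.restrict (Ioi (0 : ℝ))) (Ioi 0) (fun a ↦ a ^ κ)
      (fun a b ↦ (a + b) / 2) (fun a b ↦ ENNReal.ofReal (jacobianGain κ a b)) := by
  intro f g h hf hg hh H
  have hpull : ∀ {k : ℝ → ℝ≥0∞}, Measurable k → Measurable ((Ioi (0 : ℝ)).indicator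
      fun a ↦ ENNReal.ofReal (κ * a ^ (κ - 1)) * k (a ^ κ)) := fun hk ↦
    ((Measurable.ennreal_ofReal (by fun_prop)).mul (hk.comp (by fun_prop))).indicator
      measurableSet_Ioi
  rw [setLIntegral_Ioi_comp_rpow hκ f, setLIntegral_Ioi_comp_rpow hκ g,
    setLIntegral_Ioi_comp_rpow hκ h]
  simp_rw [← lintegral_indicator measurableSet_Ioi]
  refine prekopa_leindler_midpoint (hpull hf) (hpull hg) (hpull hh) fun a b ↦ ?_
  by_cases ha : a ∈ Ioi (0 : ℝ)
  swap
  · simp [indicator_of_notMem ha]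
  by_cases hb : b ∈ Ioi (0 : ℝ)
  swap
  · simp [indicator_of_notMem hb]
  have hab : (a + b) / 2 ∈ Ioi (0 : ℝ) := mem_Ioi.mpr (half_pos (add_pos ha hb))
  rw [indicator_of_mem ha, indicator_of_mem hb, indicator_of_mem hab]
  have hJ : ENNReal.ofReal (κ * a ^ (κ - 1)) * ENNReal.ofReal (κ * b ^ (κ - 1)) *
      ENNReal.ofReal (jacobianGain κ a b) ^ 2
        = ENNReal.ofReal (κ * ((a + b) / 2) ^ (κ - 1)) ^ 2 := by
    rw [mem_Ioi] at ha hb hab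
    rw [← ENNReal.ofReal_mul (by positivity), ← ENNReal.ofReal_pow (jacobianGain_nonneg ha hb),
      ← ENNReal.ofReal_mul (by positivity), ← ENNReal.ofReal_pow (by positivity), mul_pow,
      ← jacobianGain_sq_mul ha hb]
    ring_nf
  calc _ = ENNReal.ofReal (κ * a ^ (κ - 1)) * ENNReal.ofReal (κ * b ^ (κ - 1)) *
        (f (a ^ κ) * g (b ^ κ)) := by ring
    _ ≤ ENNReal.ofReal (κ * a ^ (κ - 1)) * ENNReal.ofReal (κ * b ^ (κ - 1)) *
        (ENNReal.ofReal (jacobianGain κ a b) * h (((a + b) / 2) ^ κ)) ^ 2 := by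
        gcongr
        exact H a ha b hb
    _ = _ := by rw [mul_pow, ← mul_assoc, hJ, mul_pow]

theorem prekopaLeindler_orthant (hκ : 0 < κ) (n : ℕ) :
    PrekopaLeindler (volume.restrict (orthant n)) (orthant n) (fun a i ↦ a i ^ κ)
      (fun a b i ↦ (a i + b i) / 2)
      (fun a b ↦ ∏ i, ENNReal.ofReal (jacobianGain κ (a i) (b i))) := by
  rw [orthant, volume_pi, Measure.restrict_pi_pi]
  exact (prekopaLeindler_rpow hκ).pi n

end PowerSubstitution

local notation "γ" => gaussianPDFReal 0 1

section GaussianTail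

/-- The tail `P(G ≥ t)` of a standard Gaussian variable `G`. -/
noncomputable def gaussianTail (t : ℝ) : ℝ := (gaussianReal 0 1).real (Ici t)

lemma stdGaussianPDF_eq (x : ℝ) : γ x = (√(2 * π))⁻¹ * exp (-(x ^ 2 / 2)) := by
  simp [gaussianPDFReal, neg_div]

lemma stdGaussianPDF_pos (x : ℝ) : 0 < γ x := gaussianPDFReal_pos 0 1 x one_ne_zero

lemma stdGaussianPDF_neg (x : ℝ) : γ (-x) = γ x := by simp [stdGaussianPDF_eq]

lemma stdGaussianPDF_abs (x : ℝ) : γ |x| = γ x := by simp [stdGaussianPDF_eq]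

lemma hasDerivAt_stdGaussianPDF (x : ℝ) : HasDerivAt γ (-(x * γ x)) x := by
  have hexponent : HasDerivAt (fun y : ℝ ↦ -(y ^ 2 / 2)) (-x) x :=
    ((hasDerivAt_pow 2 x).div_const 2).neg.congr_deriv (by simp)
  rw [show γ = fun y ↦ (√(2 * π))⁻¹ * exp (-(y ^ 2 / 2)) from funext stdGaussianPDF_eq]
  exact (hexponent.exp.const_mul _).congr_deriv (by ring)

lemma continuous_stdGaussianPDF : Continuous γ :=
  continuous_iff_continuousAt.mpr fun x ↦ (hasDerivAt_stdGaussianPDF x).continuousAt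

lemma tendsto_stdGaussianPDF_atTop : Filter.Tendsto γ Filter.atTop (nhds 0) := by
  rw [show γ = fun y ↦ (√(2 * π))⁻¹ * exp (-(y ^ 2 / 2)) from funext stdGaussianPDF_eq,
    ← mul_zero (√(2 * π))⁻¹]
  exact ((tendsto_exp_neg_atTop_nhds_zero).comp
    ((Filter.tendsto_pow_atTop two_ne_zero).atTop_div_const two_pos)).const_mul _

lemma stdGaussianPDF_inv_le {w : ℝ} (hw : |w| ≤ 1) : (γ w)⁻¹ ≤ 6 := by
  have hsqrt : √(2 * π) ≤ 3 := sqrt_le_iff.mpr ⟨by norm_num, by linarith [pi_lt_d2]⟩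
  have hexp : exp (w ^ 2 / 2) ≤ 2 := by
    have hhalf : exp (1 / 2) ≤ 2 := by
      refine le_of_sq_le_sq ?_ zero_le_two
      rw [← exp_nat_mul]
      norm_num
      linarith [exp_one_lt_d9]
    refine (exp_le_exp.mpr ?_).trans hhalf
    linarith [(sq_le_one_iff_abs_le_one w).mpr hw]
  calc (γ w)⁻¹ = √(2 * π) * exp (w ^ 2 / 2) := by
        rw [stdGaussianPDF_eq, mul_inv, inv_inv, ← exp_neg, neg_neg]
    _ ≤ 3 * 2 := by gcongr
    _ = 6 := by norm_num

lemma gaussianTail_eq_integral (t : ℝ) : gaussianTail t = ∫ x in Ioi t, γ x := by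
  rw [gaussianTail, measureReal_def, gaussianReal_apply_eq_integral _ one_ne_zero,
    ENNReal.toReal_ofReal (integral_nonneg fun x ↦ gaussianPDFReal_nonneg _ _ _),
    integral_Ici_eq_integral_Ioi]

lemma gaussianTail_nonneg (t : ℝ) : 0 ≤ gaussianTail t := measureReal_nonneg

lemma gaussianTail_le_one (t : ℝ) : gaussianTail t ≤ 1 := measureReal_le_one

lemma antitone_gaussianTail : Antitone gaussianTail := fun _ _ h ↦
  measureReal_mono (Ici_subset_Ici.mpr h)

lemma gaussianTail_neg (t : ℝ) : gaussianTail (-t) = 1 - gaussianTail t := by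
  have hIic : gaussianTail (-t) = ∫ x in Iic t, γ x := by
    simp_rw [gaussianTail_eq_integral, ← integral_comp_neg_Iic, stdGaussianPDF_neg]
  have htotal := intervalIntegral.integral_Iic_add_Ioi (b := t)
    (integrable_gaussianPDFReal 0 1).integrableOn (integrable_gaussianPDFReal 0 1).integrableOn
  rw [integral_gaussianPDFReal_eq_one 0 one_ne_zero] at htotal
  rw [hIic, gaussianTail_eq_integral]
  linarith

lemma hasDerivAt_gaussianTail (t : ℝ) : HasDerivAt gaussianTail (-γ t) t := by
  have hinterval : gaussianTail = fun x ↦ gaussianTail 0 - ∫ y in (0 : ℝ)..x, γ y := by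
    funext x
    have hsplit := intervalIntegral.integral_interval_add_Ioi (a := 0) (b := x)
      (integrable_gaussianPDFReal 0 1).integrableOn (integrable_gaussianPDFReal 0 1).integrableOn
    rw [← gaussianTail_eq_integral, ← gaussianTail_eq_integral] at hsplit
    linarith
  rw [hinterval]
  simpa using (intervalIntegral.integral_hasDerivAt_right (a := 0) (b := t)
    (continuous_stdGaussianPDF.intervalIntegrable _ _)
    (continuous_stdGaussianPDF.stronglyMeasurableAtFilter _ _)
    continuous_stdGaussianPDF.continuousAt).const_sub (gaussianTail 0)

lemma continuous_gaussianTail : Continuous gaussianTail :=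
  continuous_iff_continuousAt.mpr fun x ↦ (hasDerivAt_gaussianTail x).continuousAt

theorem mul_gaussianTail_le_stdGaussianPDF {t : ℝ} (ht : 0 ≤ t) : t * gaussianTail t ≤ γ t := by
  have hderiv : ∀ x ∈ Ioi t, HasDerivAt (fun x ↦ -γ x) (x * γ x) x := fun x _ ↦
    (hasDerivAt_stdGaussianPDF x).neg.congr_deriv (neg_neg _)
  have hnonneg : ∀ x ∈ Ioi t, 0 ≤ x * γ x := fun x hx ↦
    mul_nonneg (ht.trans (le_of_lt hx)) (stdGaussianPDF_pos x).le
  have hcont : ContinuousWithinAt (fun x ↦ -γ x) (Ici t) t :=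
    continuous_stdGaussianPDF.neg.continuousWithinAt
  have hlim : Filter.Tendsto (fun x ↦ -γ x) Filter.atTop (nhds 0) := by
    simpa using tendsto_stdGaussianPDF_atTop.neg
  calc t * gaussianTail t = ∫ x in Ioi t, t * γ x := by
        rw [integral_const_mul, gaussianTail_eq_integral]
    _ ≤ ∫ x in Ioi t, x * γ x :=
        setIntegral_mono_on ((integrable_gaussianPDFReal 0 1).integrableOn.const_mul _)
          (integrableOn_Ioi_deriv_of_nonneg hcont hderiv hnonneg hlim) measurableSet_Ioi
          fun x hx ↦ mul_le_mul_of_nonneg_right (le_of_lt hx) (stdGaussianPDF_pos x).le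
    _ = γ t := by
        rw [integral_Ioi_of_hasDerivAt_of_nonneg hcont hderiv hnonneg hlim, zero_sub, neg_neg]

end GaussianTail

section Stein

/-- The bounded solution `f` of the Stein equation
`f' w - w * f w = 1_{w < t} - P(G < t)`. -/
noncomputable def steinSol (t w : ℝ) : ℝ :=
  (γ w)⁻¹ * (gaussianTail (-min w t) * gaussianTail (max w t))

/-- The right derivative of `steinSol t`, as given by the Stein equation. -/
noncomputable def steinDeriv (t w : ℝ) : ℝ :=
  w * steinSol t w + ((if w < t then 1 else 0) - gaussianTail (-t))

lemma steinSol_nonneg (t w : ℝ) : 0 ≤ steinSol t w :=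
  mul_nonneg (inv_nonneg.mpr (stdGaussianPDF_pos w).le)
    (mul_nonneg (gaussianTail_nonneg _) (gaussianTail_nonneg _))

lemma steinSol_le (t w : ℝ) : steinSol t w ≤ (γ w)⁻¹ * gaussianTail |w| := by
  refine mul_le_mul_of_nonneg_left ?_ (inv_nonneg.mpr (stdGaussianPDF_pos w).le)
  rcases le_total 0 w with hw | hw
  · rw [abs_of_nonneg hw]
    exact (mul_le_of_le_one_left (gaussianTail_nonneg _) (gaussianTail_le_one _)).trans
      (antitone_gaussianTail (le_max_left _ _))
  · rw [abs_of_nonpos hw]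
    exact (mul_le_of_le_one_right (gaussianTail_nonneg _) (gaussianTail_le_one _)).trans
      (antitone_gaussianTail (neg_le_neg (min_le_left _ _)))

lemma abs_mul_steinSol_le_one (t w : ℝ) : |w * steinSol t w| ≤ 1 := by
  rw [abs_mul, abs_of_nonneg (steinSol_nonneg t w)]
  calc |w| * steinSol t w ≤ |w| * ((γ w)⁻¹ * gaussianTail |w|) := by
        gcongr
        exact steinSol_le t w
    _ = (γ |w|)⁻¹ * (|w| * gaussianTail |w|) := by rw [stdGaussianPDF_abs, mul_left_comm]
    _ ≤ (γ |w|)⁻¹ * γ |w| :=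
        mul_le_mul_of_nonneg_left (mul_gaussianTail_le_stdGaussianPDF (abs_nonneg w))
          (inv_nonneg.mpr (stdGaussianPDF_pos _).le)
    _ = 1 := inv_mul_cancel₀ (stdGaussianPDF_pos _).ne'

lemma steinSol_le_six (t w : ℝ) : steinSol t w ≤ 6 := by
  rcases le_total 1 |w| with hw | hw
  · have hmul := abs_mul_steinSol_le_one t w
    rw [abs_mul, abs_of_nonneg (steinSol_nonneg t w)] at hmul
    nlinarith [steinSol_nonneg t w]
  · calc steinSol t w ≤ (γ w)⁻¹ * gaussianTail |w| := steinSol_le t w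
      _ ≤ 6 * 1 := mul_le_mul (stdGaussianPDF_inv_le hw) (gaussianTail_le_one _)
          (gaussianTail_nonneg _) (by norm_num)
      _ = 6 := mul_one 6

lemma abs_steinDeriv_le_six (t w : ℝ) : |steinDeriv t w| ≤ 6 := by
  have hmul := abs_le.mp (abs_mul_steinSol_le_one t w)
  have hnonneg := gaussianTail_nonneg (-t)
  have hle_one := gaussianTail_le_one (-t)
  rw [steinDeriv, abs_le]
  split_ifs <;> constructor <;> linarith [hmul.1, hmul.2]

lemma continuous_steinSol (t : ℝ) : Continuous (steinSol t) :=
  (continuous_stdGaussianPDF.inv₀ fun x ↦ (stdGaussianPDF_pos x).ne').mul <|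
    (continuous_gaussianTail.comp (by fun_prop)).mul (continuous_gaussianTail.comp (by fun_prop))

lemma hasDerivAt_stdGaussianPDF_inv (w : ℝ) : HasDerivAt (fun x ↦ (γ x)⁻¹) (w * (γ w)⁻¹) w := by
  have hpos := (stdGaussianPDF_pos w).ne'
  exact ((hasDerivAt_stdGaussianPDF w).inv hpos).congr_deriv (by field_simp)

lemma hasDerivAt_steinSol_of_lt {t w : ℝ} (hw : w < t) :
    HasDerivAt (steinSol t) (steinDeriv t w) w := by
  have hpos := (stdGaussianPDF_pos w).ne'
  have heq : steinSol t =ᶠ[nhds w] fun x ↦ (γ x)⁻¹ * (gaussianTail (-x) * gaussianTail t) := by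
    filter_upwards [Iio_mem_nhds hw] with x hx
    rw [steinSol, min_eq_left (le_of_lt hx), max_eq_right (le_of_lt hx)]
  have htail : HasDerivAt (fun x ↦ gaussianTail (-x)) (γ w) w :=
    ((hasDerivAt_gaussianTail (-w)).comp w (hasDerivAt_neg w)).congr_deriv
      (by simp [stdGaussianPDF_neg])
  refine HasDerivAt.congr_of_eventuallyEq ?_ heq
  refine ((hasDerivAt_stdGaussianPDF_inv w).mul (htail.mul_const _)).congr_deriv ?_
  rw [steinDeriv, steinSol, min_eq_left hw.le, max_eq_right hw.le, if_pos hw, gaussianTail_neg t]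
  field_simp
  ring

lemma hasDerivWithinAt_steinSol_of_le {t w : ℝ} (hw : t ≤ w) :
    HasDerivWithinAt (steinSol t) (steinDeriv t w) (Ici w) w := by
  have hpos := (stdGaussianPDF_pos w).ne'
  have heq : ∀ x ∈ Ici w, steinSol t x = (γ x)⁻¹ * (gaussianTail (-t) * gaussianTail x) := by
    intro x hx
    rw [steinSol, min_eq_right (hw.trans hx), max_eq_left (hw.trans hx)]
  refine HasDerivWithinAt.congr ?_ heq (heq w self_mem_Ici)
  refine ((hasDerivAt_stdGaussianPDF_inv w).mul
    ((hasDerivAt_gaussianTail w).const_mul _)).hasDerivWithinAt.congr_deriv ?_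
  rw [steinDeriv, steinSol, min_eq_right hw, max_eq_left hw, if_neg hw.not_gt]
  field_simp
  ring

lemma hasDerivWithinAt_steinSol (t w : ℝ) :
    HasDerivWithinAt (steinSol t) (steinDeriv t w) (Ici w) w :=
  (lt_or_ge w t).elim (fun hw ↦ (hasDerivAt_steinSol_of_lt hw).hasDerivWithinAt)
    hasDerivWithinAt_steinSol_of_le

lemma abs_image_sub_sub_mul_le {f f' : ℝ → ℝ} (hf : Continuous f)
    (hf' : ∀ z, HasDerivWithinAt f (f' z) (Ici z) z) {p q y C : ℝ}
    (hC : ∀ z ∈ uIcc p q, |f' z - y| ≤ C) :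
    |f q - f p - (q - p) * y| ≤ C * |q - p| := by
  wlog hpq : p ≤ q generalizing p q
  · rw [abs_sub_comm q p, ← abs_neg]
    convert this (p := q) (q := p) (by rwa [uIcc_comm]) (le_of_not_ge hpq) using 2
    ring
  rw [uIcc_of_le hpq] at hC
  have hsegment := norm_image_sub_le_of_norm_deriv_right_le_segment
    (f := fun z ↦ f z - z * y) (f' := fun z ↦ f' z - y) (by fun_prop)
    (fun z _ ↦ by
      simpa using (hf' z).fun_sub (((hasDerivAt_id z).mul_const y).hasDerivWithinAt))
    (fun z hz ↦ hC z ⟨hz.1, hz.2.le⟩) q ⟨hpq, le_rfl⟩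
  rw [abs_of_nonneg (sub_nonneg.mpr hpq)]
  convert hsegment using 1
  rw [norm_eq_abs]
  ring_nf

lemma abs_steinSol_sub_le (t p q : ℝ) : |steinSol t q - steinSol t p| ≤ 6 * |q - p| := by
  simpa using abs_image_sub_sub_mul_le (y := 0) (continuous_steinSol t)
    (hasDerivWithinAt_steinSol t) fun z _ ↦ by simpa using abs_steinDeriv_le_six t z

lemma abs_steinDeriv_sub_le {t z w : ℝ} (hside : z < t ↔ w < t) :
    |steinDeriv t z - steinDeriv t w| ≤ 6 * |z - w| * (1 + |w|) := by
  have hsplit : steinDeriv t z - steinDeriv t w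
      = (z - w) * steinSol t z + w * (steinSol t z - steinSol t w) := by
    simp only [steinDeriv, hside]
    ring
  rw [hsplit]
  calc _ ≤ |z - w| * steinSol t z + |w| * |steinSol t z - steinSol t w| := by
        refine (abs_add_le _ _).trans_eq ?_
        rw [abs_mul, abs_mul, abs_of_nonneg (steinSol_nonneg t z)]
    _ ≤ |z - w| * 6 + |w| * (6 * |z - w|) := by
        gcongr
        · exact steinSol_le_six t z
        · exact abs_steinSol_sub_le t w z
    _ = _ := by ring

theorem abs_steinSol_sub_sub_mul_le (t w d : ℝ) :
    |steinSol t w - steinSol t (w - d) - d * steinDeriv t w|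
      ≤ |d| * (6 * |d| * (1 + |w|) + 12 * (if |w - t| ≤ |d| then 1 else 0)) := by
  split_ifs with hnear
  · have hincr := abs_steinSol_sub_le t (w - d) w
    rw [sub_sub_cancel] at hincr
    have hderiv : |d * steinDeriv t w| ≤ |d| * 6 := by
      rw [abs_mul]
      gcongr
      exact abs_steinDeriv_le_six t w
    have hnonneg : 0 ≤ |d| * (6 * |d| * (1 + |w|)) := by positivity
    linarith [abs_sub (steinSol t w - steinSol t (w - d)) (d * steinDeriv t w)]
  · have hderiv : ∀ z ∈ uIcc (w - d) w,
        |steinDeriv t z - steinDeriv t w| ≤ 6 * |d| * (1 + |w|) := by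
      intro z hz
      have hzw : |z - w| ≤ |d| := by
        simpa [abs_sub_comm] using abs_sub_right_of_mem_uIcc hz
      refine (abs_steinDeriv_sub_le ?_).trans (by gcongr)
      rcases lt_abs.mp (not_le.mp hnear) with h | h <;> constructor <;> intro <;>
        linarith [abs_le.mp hzw]
    have hsegment := abs_image_sub_sub_mul_le (continuous_steinSol t)
      (hasDerivWithinAt_steinSol t) hderiv
    rw [sub_sub_cancel] at hsegment
    linarith

end Stein

section Rademacher

open scoped BigOperators

lemma intUnit_cast_sq (s : ℤˣ) : ((s : ℤ) : ℝ) ^ 2 = 1 := by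
  rcases Int.units_eq_one_or s with rfl | rfl <;> simp

lemma abs_intUnit_cast (s : ℤˣ) : |((s : ℤ) : ℝ)| = 1 := by
  rcases Int.units_eq_one_or s with rfl | rfl <;> simp

variable {ι : Type*} [Fintype ι]

/-- The Rademacher sum `∑ i, a i * ε i`; averages `𝔼 ε` over `ι → ℤˣ` make the signs independent
and uniform. -/
def rademacherSum (a : ι → ℝ) (ε : ι → ℤˣ) : ℝ := ∑ i, a i * ((ε i : ℤ) : ℝ)

lemma rademacherSum_div (a : ι → ℝ) (c : ℝ) (ε : ι → ℤˣ) :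
    rademacherSum (fun i ↦ a i / c) ε = rademacherSum a ε / c := by
  simp_rw [rademacherSum, Finset.sum_div, div_mul_eq_mul_div]

lemma sum_abs_cube_pos {a : ι → ℝ} (ha : ∑ i, a i ^ 2 = 1) : 0 < ∑ i, |a i| ^ 3 := by
  obtain ⟨i, -, hi⟩ := Finset.exists_ne_zero_of_sum_ne_zero (ha.trans_ne one_ne_zero)
  have hai : a i ≠ 0 := pow_ne_zero_iff two_ne_zero |>.mp hi
  exact Finset.sum_pos' (fun i _ ↦ by positivity) ⟨i, Finset.mem_univ i, by positivity⟩

variable [DecidableEq ι]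

/-- The tail probability `P (t ≤ ∑ i, a i * ε i)` of a Rademacher sum. -/
noncomputable def rademacherTail (a : ι → ℝ) (t : ℝ) : ℝ :=
  𝔼 ε, if t ≤ rademacherSum a ε then 1 else 0

lemma rademacherTail_nonneg (a : ι → ℝ) (t : ℝ) : 0 ≤ rademacherTail a t :=
  Finset.expect_nonneg fun ε _ ↦ by split_ifs <;> norm_num

lemma rademacherTail_le_one (a : ι → ℝ) (t : ℝ) : rademacherTail a t ≤ 1 :=
  Finset.expect_le Finset.univ_nonempty fun ε _ ↦ by split_ifs <;> norm_num

lemma rademacherTail_div {c : ℝ} (hc : 0 < c) (a : ι → ℝ) (t : ℝ) :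
    rademacherTail (fun i ↦ a i / c) (t / c) = rademacherTail a t := by
  simp_rw [rademacherTail, rademacherSum_div, div_le_div_iff_of_pos_right hc]

lemma rademacherSum_update_neg (a : ι → ℝ) (ε : ι → ℤˣ) (j : ι) :
    rademacherSum a (Function.update ε j (-ε j))
      = rademacherSum a ε - 2 * (a j * ((ε j : ℤ) : ℝ)) := by
  have hterm : ∀ i, a i * ((Function.update ε j (-ε j) i : ℤ) : ℝ)
      = a i * ((ε i : ℤ) : ℝ) - if i = j then 2 * (a j * ((ε j : ℤ) : ℝ)) else 0 := by
    intro i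
    rcases eq_or_ne i j with rfl | hij
    · simp only [Function.update_self, Units.val_neg, Int.cast_neg, if_true]
      ring
    · simp [hij]
  simp [rademacherSum, hterm, Finset.sum_sub_distrib]

lemma expect_update_neg (j : ι) (F : (ι → ℤˣ) → ℝ) :
    𝔼 ε, F (Function.update ε j (-ε j)) = 𝔼 ε, F ε :=
  Fintype.expect_equiv (Function.Involutive.toPerm (fun ε ↦ Function.update ε j (-ε j))
    fun ε ↦ by simp) _ _ fun _ ↦ rfl

-- Pair each sign vector with the one obtained by flipping its `j`-th sign.
lemma expect_rademacherSum_mul (a : ι → ℝ) (f : ℝ → ℝ) :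
    𝔼 ε, rademacherSum a ε * f (rademacherSum a ε)
      = ∑ j, 𝔼 ε, a j * ((ε j : ℤ) : ℝ) / 2 *
          (f (rademacherSum a ε) - f (rademacherSum a ε - 2 * (a j * ((ε j : ℤ) : ℝ)))) := by
  have hsum : ∀ ε, rademacherSum a ε * f (rademacherSum a ε)
      = ∑ j, a j * ((ε j : ℤ) : ℝ) * f (rademacherSum a ε) := fun ε ↦ Finset.sum_mul _ _ _
  simp_rw [hsum]
  rw [Finset.expect_sum_comm]
  refine Finset.sum_congr rfl fun j _ ↦ ?_
  have hflip := expect_update_neg j fun ε ↦ a j * ((ε j : ℤ) : ℝ) * f (rademacherSum a ε)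
  simp only [rademacherSum_update_neg, Function.update_self, Units.val_neg, Int.cast_neg] at hflip
  calc 𝔼 ε, a j * ((ε j : ℤ) : ℝ) * f (rademacherSum a ε)
      = (𝔼 ε, a j * ((ε j : ℤ) : ℝ) * f (rademacherSum a ε) + 𝔼 ε, a j * -((ε j : ℤ) : ℝ) *
          f (rademacherSum a ε - 2 * (a j * ((ε j : ℤ) : ℝ)))) / 2 := by rw [hflip]; ring
    _ = _ := by
      rw [← Finset.expect_add_distrib, Finset.expect_div]
      exact Finset.expect_congr rfl fun ε _ ↦ by ring

variable {a : ι → ℝ}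

lemma expect_rademacherSum_sq (a : ι → ℝ) : 𝔼 ε, rademacherSum a ε ^ 2 = ∑ i, a i ^ 2 := by
  simp_rw [sq (rademacherSum a _)]
  rw [expect_rademacherSum_mul a fun x ↦ x]
  refine Finset.sum_congr rfl fun j _ ↦ ?_
  rw [Finset.expect_congr rfl fun ε _ ↦ show _ = a j ^ 2 by
    linear_combination a j ^ 2 * intUnit_cast_sq (ε j), Fintype.expect_const]

lemma expect_abs_rademacherSum_le_one (ha : ∑ i, a i ^ 2 = 1) :
    𝔼 ε, |rademacherSum a ε| ≤ 1 := by
  calc 𝔼 ε, |rademacherSum a ε| ≤ 𝔼 ε, (1 + rademacherSum a ε ^ 2) / 2 :=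
        Finset.expect_le_expect fun ε _ ↦ by
          nlinarith [sq_nonneg (|rademacherSum a ε| - 1), sq_abs (rademacherSum a ε)]
    _ = 1 := by
        rw [← Finset.expect_div, Finset.expect_add_distrib, expect_rademacherSum_sq, ha,
          Fintype.expect_const]
        norm_num

/-- The function `w ↦ w - c` truncated to `[-L, L]`, the test function of the concentration
inequality `expect_abs_rademacherSum_sub_le_le`. -/
noncomputable def ramp (c L w : ℝ) : ℝ := max (-L) (min L (w - c))

lemma abs_ramp_le {c L w : ℝ} (hL : 0 ≤ L) : |ramp c L w| ≤ L :=
  abs_le.mpr ⟨le_max_left _ _, max_le (by linarith) (min_le_left _ _)⟩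

lemma monotone_ramp (c L : ℝ) : Monotone (ramp c L) := fun w w' h ↦ by
  unfold ramp
  gcongr

lemma min_le_ramp_add_sub_ramp {c r b x δ : ℝ} (hr : 0 ≤ r) (hb : 0 ≤ b) (hδ : 0 ≤ δ)
    (hx : |x - c| ≤ r ∨ |x + δ - c| ≤ r) :
    min δ b ≤ ramp c (r + b) (x + δ) - ramp c (r + b) x := by
  simp only [abs_le] at hx
  unfold ramp
  grind

lemma indicator_mul_le_mul_ramp_sub_ramp {c r b : ℝ} (hr : 0 ≤ r) (hb : 0 ≤ b) (w δ : ℝ) :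
    (if |w - c| ≤ r then 1 else 0) * (|δ| * min |δ| b)
      ≤ δ * (ramp c (r + b) w - ramp c (r + b) (w - δ)) := by
  split_ifs with hw
  · rw [one_mul]
    rcases le_total 0 δ with hδ | hδ
    · rw [abs_of_nonneg hδ]
      have hstep := min_le_ramp_add_sub_ramp (c := c) (x := w - δ) hr hb hδ (Or.inr (by simpa))
      rw [sub_add_cancel] at hstep
      exact mul_le_mul_of_nonneg_left hstep hδ
    · rw [abs_of_nonpos hδ]
      have hstep := min_le_ramp_add_sub_ramp hr hb (neg_nonneg.mpr hδ) (Or.inl hw)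
      rw [← sub_eq_add_neg] at hstep
      linarith [mul_le_mul_of_nonneg_left hstep (neg_nonneg.mpr hδ)]
  · rw [zero_mul]
    rcases le_total 0 δ with hδ | hδ
    · exact mul_nonneg hδ (sub_nonneg.mpr (monotone_ramp _ _ (by linarith)))
    · exact mul_nonneg_of_nonpos_of_nonpos hδ (sub_nonpos.mpr (monotone_ramp _ _ (by linarith)))

lemma sq_sub_cube_div_le {x b : ℝ} (hx : 0 ≤ x) (hb : 0 < b) :
    x ^ 2 - x ^ 3 / (2 * b) ≤ x * min (2 * x) b / 2 := by
  rcases le_total (2 * x) b with h | h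
  · rw [min_eq_left h]
    linarith [show 0 ≤ x ^ 3 / (2 * b) by positivity]
  · rw [min_eq_right h]
    have hsquare : x * b / 2 - (x ^ 2 - x ^ 3 / (2 * b)) = x * (b - x) ^ 2 / (2 * b) := by
      field_simp
      ring
    linarith [show 0 ≤ x * (b - x) ^ 2 / (2 * b) by positivity]

theorem expect_abs_rademacherSum_sub_le_le (ha : ∑ i, a i ^ 2 = 1) (t : ℝ) {r : ℝ} (hr : 0 ≤ r) :
    𝔼 ε, (if |rademacherSum a ε - t| ≤ r then (1 : ℝ) else 0) ≤ 2 * (r + ∑ i, |a i| ^ 3) := by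
  set β := ∑ i, |a i| ^ 3 with hβ_def
  have hβ : 0 < β := sum_abs_cube_pos ha
  set P := 𝔼 ε, (if |rademacherSum a ε - t| ≤ r then (1 : ℝ) else 0) with hP
  have hupper : 𝔼 ε, rademacherSum a ε * ramp t (r + β) (rademacherSum a ε) ≤ r + β := by
    calc _ ≤ 𝔼 ε, |rademacherSum a ε| * (r + β) := by
          refine Finset.expect_le_expect fun ε _ ↦ (le_abs_self _).trans ?_
          rw [abs_mul]
          gcongr
          exact abs_ramp_le (by positivity)
      _ = (𝔼 ε, |rademacherSum a ε|) * (r + β) := by rw [Finset.expect_mul]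
      _ ≤ r + β := mul_le_of_le_one_left (by positivity) (expect_abs_rademacherSum_le_one ha)
  have hlower : ∀ j, P * (a j ^ 2 - |a j| ^ 3 / (2 * β)) ≤ 𝔼 ε, a j * ((ε j : ℤ) : ℝ) / 2 *
      (ramp t (r + β) (rademacherSum a ε)
        - ramp t (r + β) (rademacherSum a ε - 2 * (a j * ((ε j : ℤ) : ℝ)))) := by
    intro j
    calc _ ≤ P * (|a j| * min (2 * |a j|) β / 2) := by
          rw [← sq_abs (a j)]
          exact mul_le_mul_of_nonneg_left (sq_sub_cube_div_le (abs_nonneg _) hβ)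
            (Finset.expect_nonneg fun ε _ ↦ by positivity)
      _ = 𝔼 ε, (if |rademacherSum a ε - t| ≤ r then (1 : ℝ) else 0) *
          (|a j| * min (2 * |a j|) β / 2) := by rw [hP, Finset.expect_mul]
      _ ≤ _ := by
          refine Finset.expect_le_expect fun ε _ ↦ ?_
          have hramp := indicator_mul_le_mul_ramp_sub_ramp (c := t) hr hβ.le (rademacherSum a ε)
            (2 * (a j * ((ε j : ℤ) : ℝ)))
          rw [abs_mul, abs_mul, abs_intUnit_cast, mul_one, abs_two] at hramp
          linarith
  have hhalf : ∑ j, P * (a j ^ 2 - |a j| ^ 3 / (2 * β)) = P / 2 := by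
    rw [← Finset.mul_sum, Finset.sum_sub_distrib, ha, ← Finset.sum_div, ← hβ_def]
    field_simp
    norm_num
  rw [expect_rademacherSum_mul] at hupper
  linarith [Finset.sum_le_sum fun j (_ : j ∈ Finset.univ) ↦ hlower j]

lemma rademacherTail_sub_gaussianTail (ha : ∑ i, a i ^ 2 = 1) (t : ℝ) :
    rademacherTail a t - gaussianTail t
      = ∑ j, 𝔼 ε, a j * ((ε j : ℤ) : ℝ) / 2 * (steinSol t (rademacherSum a ε)
          - steinSol t (rademacherSum a ε - 2 * (a j * ((ε j : ℤ) : ℝ)))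
          - 2 * (a j * ((ε j : ℤ) : ℝ)) * steinDeriv t (rademacherSum a ε)) := by
  have hstein : rademacherTail a t - gaussianTail t
      = 𝔼 ε, rademacherSum a ε * steinSol t (rademacherSum a ε)
        - 𝔼 ε, steinDeriv t (rademacherSum a ε) := by
    rw [rademacherTail, ← Finset.expect_sub_distrib, sub_eq_iff_eq_add,
      ← Fintype.expect_const (ι := ι → ℤˣ) (gaussianTail t), ← Finset.expect_add_distrib]
    refine Finset.expect_congr rfl fun ε _ ↦ ?_
    rw [steinDeriv, gaussianTail_neg, ← ite_not (p := t ≤ rademacherSum a ε)]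
    simp only [not_le]
    split_ifs <;> ring
  have hderiv : 𝔼 ε, steinDeriv t (rademacherSum a ε) = ∑ j, 𝔼 ε, a j * ((ε j : ℤ) : ℝ) / 2 *
      (2 * (a j * ((ε j : ℤ) : ℝ)) * steinDeriv t (rademacherSum a ε)) := by
    rw [← Finset.expect_sum_comm]
    refine Finset.expect_congr rfl fun ε _ ↦ ?_
    calc _ = ∑ j, a j ^ 2 * steinDeriv t (rademacherSum a ε) := by
          rw [← Finset.sum_mul, ha, one_mul]
      _ = _ := Finset.sum_congr rfl fun j _ ↦ by
        linear_combination
          -(a j ^ 2 * steinDeriv t (rademacherSum a ε)) * intUnit_cast_sq (ε j)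
  rw [hstein, hderiv, expect_rademacherSum_mul, ← Finset.sum_sub_distrib]
  simp_rw [← Finset.expect_sub_distrib, ← mul_sub]

lemma abs_expect_stein_remainder_le (ha : ∑ i, a i ^ 2 = 1) (t : ℝ) (j : ι) :
    |𝔼 ε, a j * ((ε j : ℤ) : ℝ) / 2 * (steinSol t (rademacherSum a ε)
          - steinSol t (rademacherSum a ε - 2 * (a j * ((ε j : ℤ) : ℝ)))
          - 2 * (a j * ((ε j : ℤ) : ℝ)) * steinDeriv t (rademacherSum a ε))|
      ≤ a j ^ 2 * (72 * |a j| + 24 * ∑ i, |a i| ^ 3) := by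
  calc _ ≤ 𝔼 ε, a j ^ 2 * (12 * |a j| * (1 + |rademacherSum a ε|) +
        12 * (if |rademacherSum a ε - t| ≤ 2 * |a j| then (1 : ℝ) else 0)) := by
        refine (Finset.abs_expect_le _ _).trans (Finset.expect_le_expect fun ε _ ↦ ?_)
        have htaylor := abs_steinSol_sub_sub_mul_le t (rademacherSum a ε)
          (2 * (a j * ((ε j : ℤ) : ℝ)))
        have hd : |2 * (a j * ((ε j : ℤ) : ℝ))| = 2 * |a j| := by
          rw [abs_mul, abs_mul, abs_intUnit_cast, mul_one, abs_two]
        rw [hd] at htaylor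
        rw [abs_mul, abs_div, abs_mul, abs_intUnit_cast, mul_one, abs_two, ← sq_abs (a j)]
        linarith [mul_le_mul_of_nonneg_left htaylor (div_nonneg (abs_nonneg (a j)) zero_le_two)]
    _ = a j ^ 2 * (12 * |a j| * (1 + 𝔼 ε, |rademacherSum a ε|) +
        12 * 𝔼 ε, (if |rademacherSum a ε - t| ≤ 2 * |a j| then (1 : ℝ) else 0)) := by
        rw [← Finset.mul_expect, Finset.expect_add_distrib, ← Finset.mul_expect,
          ← Finset.mul_expect, Finset.expect_add_distrib, Fintype.expect_const]
    _ ≤ a j ^ 2 * (12 * |a j| * (1 + 1) + 12 * (2 * (2 * |a j| + ∑ i, |a i| ^ 3))) := by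
        gcongr
        · exact expect_abs_rademacherSum_le_one ha
        · exact expect_abs_rademacherSum_sub_le_le ha t (by positivity)
    _ = _ := by ring

theorem berryEsseen_rademacher_unit (ha : ∑ i, a i ^ 2 = 1) (t : ℝ) :
    |rademacherTail a t - gaussianTail t| ≤ 96 * ∑ i, |a i| ^ 3 := by
  rw [rademacherTail_sub_gaussianTail ha]
  calc _ ≤ ∑ j, a j ^ 2 * (72 * |a j| + 24 * ∑ i, |a i| ^ 3) :=
        (Finset.abs_sum_le_sum_abs _ _).trans
          (Finset.sum_le_sum fun j _ ↦ abs_expect_stein_remainder_le ha t j)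
    _ = ∑ j, (72 * |a j| ^ 3 + (24 * ∑ i, |a i| ^ 3) * a j ^ 2) :=
        Finset.sum_congr rfl fun j _ ↦ by rw [← sq_abs (a j)]; ring
    _ = 96 * ∑ i, |a i| ^ 3 := by
        rw [Finset.sum_add_distrib, ← Finset.mul_sum, ← Finset.mul_sum, ha]
        ring

theorem berryEsseen_rademacher {σ : ℝ} (hσ : 0 < σ) (ha : ∑ i, a i ^ 2 = σ ^ 2) (t : ℝ) :
    |rademacherTail a t - gaussianTail (t / σ)| ≤ 96 * (∑ i, |a i| ^ 3) / σ ^ 3 := by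
  have hunit := berryEsseen_rademacher_unit (a := fun i ↦ a i / σ) (by
    simp_rw [div_pow, ← Finset.sum_div, ha, div_self (pow_pos hσ 2).ne']) (t / σ)
  simp_rw [rademacherTail_div hσ, abs_div, div_pow] at hunit
  rwa [← Finset.sum_div, abs_of_pos hσ, ← mul_div_assoc] at hunit

end Rademacher

section GaussianMixture

lemma stdGaussianPDF_mul_le_one (z : ℝ) : (1 + z ^ 2 / 2 + z ^ 4 / 8) * γ z ≤ 1 := by
  have hconst : (√(2 * π))⁻¹ ≤ 1 :=
    inv_le_one_of_one_le₀ (one_le_sqrt.mpr (by linarith [pi_gt_three]))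
  have hexp : 1 + z ^ 2 / 2 + z ^ 4 / 8 ≤ exp (z ^ 2 / 2) := by
    linarith [quadratic_le_exp_of_nonneg (x := z ^ 2 / 2) (by positivity)]
  rw [stdGaussianPDF_eq]
  calc _ ≤ exp (z ^ 2 / 2) * (1 * exp (-(z ^ 2 / 2))) := by gcongr
    _ = 1 := by rw [one_mul, ← exp_add, add_neg_cancel, exp_zero]

lemma abs_mul_stdGaussianPDF_le_one (z : ℝ) : |z * γ z| ≤ 1 := by
  have hpoly : |z| ≤ 1 + z ^ 2 / 2 + z ^ 4 / 8 := by
    nlinarith [sq_nonneg (|z| - 1), sq_abs z, show 0 ≤ z ^ 4 by positivity]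
  rw [abs_mul, abs_of_pos (stdGaussianPDF_pos z)]
  exact (mul_le_mul_of_nonneg_right hpoly (stdGaussianPDF_pos z).le).trans
    (stdGaussianPDF_mul_le_one z)

lemma abs_cube_mul_stdGaussianPDF_le (z : ℝ) : |z ^ 3 * γ z| ≤ 4 := by
  have hpoly : |z| ^ 3 ≤ 4 * (1 + z ^ 2 / 2 + z ^ 4 / 8) := by
    rw [← Even.pow_abs (by decide : Even 4), ← sq_abs z]
    nlinarith [sq_nonneg (|z| ^ 2 - |z|), sq_nonneg |z|]
  rw [abs_mul, abs_pow, abs_of_pos (stdGaussianPDF_pos z)]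
  nlinarith [stdGaussianPDF_mul_le_one z, stdGaussianPDF_pos z]

lemma abs_image_sub_sub_mul_le_sq {f f' f'' : ℝ → ℝ} {s : Set ℝ} (hs : Convex ℝ s) {C : ℝ}
    (hf : ∀ x ∈ s, HasDerivAt f (f' x) x) (hf' : ∀ x ∈ s, HasDerivAt f' (f'' x) x)
    (hC : ∀ x ∈ s, |f'' x| ≤ C) {x y : ℝ} (hx : x ∈ s) (hy : y ∈ s) :
    |f y - f x - f' x * (y - x)| ≤ C * (y - x) ^ 2 := by
  have hsub : uIcc x y ⊆ s := segment_eq_uIcc x y ▸ hs.segment_subset hx hy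
  have hderiv : ∀ z ∈ uIcc x y, ‖f' z - f' x‖ ≤ C * |y - x| := fun z hz ↦ by
    have hlip := hs.norm_image_sub_le_of_norm_hasDerivWithin_le
      (fun w hw ↦ (hf' w hw).hasDerivWithinAt) hC hx (hsub hz)
    refine hlip.trans ?_
    have hC_nonneg := (abs_nonneg _).trans (hC x hx)
    gcongr
    exact abs_sub_left_of_mem_uIcc hz
  have hmain := (convex_uIcc x y).norm_image_sub_le_of_norm_hasDerivWithin_le
    (f := fun z ↦ f z - z * f' x) (fun z hz ↦
      ((hf z (hsub hz)).fun_sub ((hasDerivAt_id z).mul_const (f' x))).hasDerivWithinAt)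
    (by simpa using hderiv) left_mem_uIcc right_mem_uIcc
  rw [norm_eq_abs, norm_eq_abs, mul_assoc, ← sq, sq_abs] at hmain
  convert hmain using 2
  ring

lemma hasDerivAt_div_sqrt (t : ℝ) {s : ℝ} (hs : 0 < s) :
    HasDerivAt (fun s ↦ t / √s) (-(t / √s) / (2 * s)) s := by
  have hsqrt : √s ≠ 0 := (sqrt_pos.mpr hs).ne'
  refine ((hasDerivAt_const s t).div (hasDerivAt_sqrt hs.ne') hsqrt).congr_deriv ?_
  rw [sq_sqrt hs.le]
  field_simp
  ring

lemma hasDerivAt_gaussianTail_div_sqrt (t : ℝ) {s : ℝ} (hs : 0 < s) :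
    HasDerivAt (fun s ↦ gaussianTail (t / √s)) (t / √s * γ (t / √s) / (2 * s)) s :=
  ((hasDerivAt_gaussianTail (t / √s)).comp (h₂ := gaussianTail) s
    (hasDerivAt_div_sqrt t hs)).congr_deriv (by ring)

lemma hasDerivAt_div_sqrt_mul_stdGaussianPDF (t : ℝ) {s : ℝ} (hs : 0 < s) :
    HasDerivAt (fun s ↦ t / √s * γ (t / √s) / (2 * s))
      (((t / √s) ^ 3 * γ (t / √s) - 3 * (t / √s * γ (t / √s))) / (4 * s ^ 2)) s := by
  have hnum := ((hasDerivAt_id (t / √s)).mul (hasDerivAt_stdGaussianPDF (t / √s))).comp s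
    (hasDerivAt_div_sqrt t hs)
  refine (hnum.div ((hasDerivAt_id s).const_mul 2) (by simp [hs.ne'])).congr_deriv ?_
  simp only [Function.comp, id, Pi.mul_apply]
  generalize t / √s = z
  field_simp
  ring

theorem abs_gaussianTail_div_sqrt_sub_le (t s : ℝ) :
    |gaussianTail (t / √s) - gaussianTail t - t * γ t / 2 * (s - 1)| ≤ 7 * (s - 1) ^ 2 := by
  by_cases hnear : s ∈ Icc (1 / 2 : ℝ) 2
  · have hpos : ∀ x ∈ Icc (1 / 2 : ℝ) 2, 0 < x := fun x hx ↦ by linarith [hx.1]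
    have hsecond : ∀ x ∈ Icc (1 / 2 : ℝ) 2,
        |((t / √x) ^ 3 * γ (t / √x) - 3 * (t / √x * γ (t / √x))) / (4 * x ^ 2)| ≤ 7 := by
      intro x hx
      have hfirst := abs_mul_stdGaussianPDF_le_one (t / √x)
      have hthird := abs_cube_mul_stdGaussianPDF_le (t / √x)
      have hdenom : 1 ≤ 4 * x ^ 2 := by nlinarith [hx.1]
      rw [abs_div, abs_of_pos (zero_lt_one.trans_le hdenom)]
      refine (div_le_self (abs_nonneg _) hdenom).trans ((abs_sub _ _).trans ?_)
      rw [abs_mul 3, abs_of_pos (three_pos (α := ℝ))]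
      linarith
    simpa using abs_image_sub_sub_mul_le_sq (convex_Icc _ _)
      (fun x hx ↦ hasDerivAt_gaussianTail_div_sqrt t (hpos x hx))
      (fun x hx ↦ hasDerivAt_div_sqrt_mul_stdGaussianPDF t (hpos x hx)) hsecond
      (⟨by norm_num, by norm_num⟩ : (1 : ℝ) ∈ Icc (1 / 2) 2) hnear
  · have hfar : 1 / 2 ≤ |s - 1| := by
      by_contra hlt
      rw [not_le, abs_lt] at hlt
      exact hnear ⟨by linarith, by linarith⟩
    have htails : |gaussianTail (t / √s) - gaussianTail t| ≤ 1 :=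
      abs_sub_le_of_nonneg_of_le (gaussianTail_nonneg _) (gaussianTail_le_one _)
        (gaussianTail_nonneg _) (gaussianTail_le_one _)
    have hlinear : |t * γ t / 2 * (s - 1)| ≤ 1 / 2 * |s - 1| := by
      rw [abs_mul, abs_div, abs_two]
      gcongr
      exact abs_mul_stdGaussianPDF_le_one t
    rw [← sq_abs (s - 1)]
    nlinarith [abs_sub (gaussianTail (t / √s) - gaussianTail t) (t * γ t / 2 * (s - 1))]

end GaussianMixture

section Unconditional

open scoped ENNReal

variable {n : ℕ}

/-- A measure on `ℝⁿ` is unconditional if it is invariant under all coordinate sign changes. -/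
def IsUnconditional (μ : Measure (Fin n → ℝ)) : Prop :=
  ∀ ε : Fin n → ℤˣ, μ.map (fun x i ↦ ((ε i : ℤ) : ℝ) * x i) = μ

lemma measurableSet_orthant : MeasurableSet (orthant n) :=
  MeasurableSet.univ_pi fun _ ↦ measurableSet_Ioi

lemma isOpen_orthant : IsOpen (orthant n) := isOpen_set_pi finite_univ fun _ _ ↦ isOpen_Ioi

lemma convex_orthant : Convex ℝ (orthant n) := convex_pi fun _ _ ↦ convex_Ioi 0

lemma rpow_mem_orthant {a : Fin n → ℝ} (ha : a ∈ orthant n) (κ : ℝ) :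
    (fun i ↦ a i ^ κ) ∈ orthant n := fun i hi ↦ rpow_pos_of_pos (ha i hi) κ

lemma intUnit_mul_pos_iff {y : ℝ} (hy : y ≠ 0) (s : ℤˣ) :
    0 < ((s : ℤ) : ℝ) * y ↔ s = if 0 < y then 1 else -1 := by
  rcases hy.lt_or_gt with hneg | hpos
  · rcases Int.units_eq_one_or s with rfl | rfl <;> simp [hneg, not_lt.mpr hneg.le]
  · rcases Int.units_eq_one_or s with rfl | rfl <;> simp [hpos, hpos.le]

lemma indicator_abs_eq_sum {A : Set (Fin n → ℝ)} {x : Fin n → ℝ} (hx : ∀ i, x i ≠ 0) :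
    A.indicator (1 : (Fin n → ℝ) → ℝ≥0∞) (fun i ↦ |x i|)
      = ∑ ε : Fin n → ℤˣ, (A ∩ orthant n).indicator 1 fun i ↦ ((ε i : ℤ) : ℝ) * x i := by
  set ε₀ : Fin n → ℤˣ := fun i ↦ if 0 < x i then 1 else -1
  have hmem : ∀ ε : Fin n → ℤˣ, (fun i ↦ ((ε i : ℤ) : ℝ) * x i) ∈ orthant n ↔ ε = ε₀ := by
    intro ε
    simp [orthant, intUnit_mul_pos_iff (hx _), funext_iff, ε₀]
  have habs : (fun i ↦ ((ε₀ i : ℤ) : ℝ) * x i) = fun i ↦ |x i| := by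
    funext i
    rw [← abs_of_pos (a := ((ε₀ i : ℤ) : ℝ) * x i) ((hmem ε₀).mpr rfl i (mem_univ i)), abs_mul,
      abs_intUnit_cast, one_mul]
  rw [Finset.sum_eq_single_of_mem ε₀ (Finset.mem_univ _)
    fun ε _ hε ↦ indicator_of_notMem (fun h ↦ hε ((hmem ε).mp h.2)) _, inter_comm,
    ← indicator_indicator, indicator_of_mem ((hmem ε₀).mpr rfl), habs]

theorem IsUnconditional.map_abs {μ : Measure (Fin n → ℝ)} (hμ : IsUnconditional μ)
    (hne : ∀ᵐ x ∂μ, ∀ i, x i ≠ 0) :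
    μ.map (fun x i ↦ |x i|) = (2 ^ n : ℝ≥0∞) • μ.restrict (orthant n) := by
  ext A hA
  have hA' : MeasurableSet (A ∩ orthant n) := hA.inter measurableSet_orthant
  have hflip : ∀ ε : Fin n → ℤˣ, Measurable fun (x : Fin n → ℝ) i ↦ ((ε i : ℤ) : ℝ) * x i :=
    fun ε ↦ by fun_prop
  calc μ.map (fun x i ↦ |x i|) A
      = ∫⁻ x, A.indicator 1 (fun i ↦ |x i|) ∂μ := by
        rw [← lintegral_map (measurable_one.indicator hA) (by fun_prop), lintegral_indicator_one hA]
    _ = ∫⁻ x, ∑ ε : Fin n → ℤˣ,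
          (A ∩ orthant n).indicator 1 (fun i ↦ ((ε i : ℤ) : ℝ) * x i) ∂μ := by
        refine lintegral_congr_ae ?_
        filter_upwards [hne] with x hx using indicator_abs_eq_sum hx
    _ = ∑ ε : Fin n → ℤˣ, ∫⁻ x,
          (A ∩ orthant n).indicator 1 (fun i ↦ ((ε i : ℤ) : ℝ) * x i) ∂μ :=
        lintegral_finsetSum _ fun ε _ ↦ (measurable_one.indicator hA').comp (hflip ε)
    _ = ∑ _ε : Fin n → ℤˣ, μ (A ∩ orthant n) := by
        refine Finset.sum_congr rfl fun ε _ ↦ ?_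
        rw [← lintegral_map (measurable_one.indicator hA') (hflip ε), hμ ε,
          lintegral_indicator_one hA']
    _ = ((2 ^ n : ℝ≥0∞) • μ.restrict (orthant n)) A := by
        simp [Measure.restrict_apply hA]

lemma ae_forall_apply_ne_zero {μ : Measure (Fin n → ℝ)} (hμ : μ ≪ volume) :
    ∀ᵐ x ∂μ, ∀ i, x i ≠ 0 :=
  ae_all_iff.mpr fun i ↦ hμ.ae_le (Measure.ae_eval_ne (fun _ ↦ volume) i 0)

lemma PrekopaLeindler.withDensity {α E : Type*} [MeasurableSpace E] {ν : Measure E} {s : Set α}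
    {φ : α → E} {m : α → α → α} {w : α → α → ℝ≥0∞} (h : PrekopaLeindler ν s φ m w)
    {ρ : E → ℝ≥0∞} (hρ : Measurable ρ)
    (hmid : ∀ a ∈ s, ∀ b ∈ s, ρ (φ a) * ρ (φ b) ≤ ρ (φ (m a b)) ^ 2) :
    PrekopaLeindler (ν.withDensity ρ) s φ m w := by
  intro f g k hf hg hk H
  rw [lintegral_withDensity_eq_lintegral_mul _ hρ hf,
    lintegral_withDensity_eq_lintegral_mul _ hρ hg, lintegral_withDensity_eq_lintegral_mul _ hρ hk]
  refine h (hρ.mul hf) (hρ.mul hg) (hρ.mul hk) fun a ha b hb ↦ ?_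
  calc ρ (φ a) * f (φ a) * (ρ (φ b) * g (φ b))
      = ρ (φ a) * ρ (φ b) * (f (φ a) * g (φ b)) := by ring
    _ ≤ ρ (φ (m a b)) ^ 2 * (w a b * k (φ (m a b))) ^ 2 :=
        mul_le_mul' (hmid a ha b hb) (H a ha b hb)
    _ = (w a b * (ρ (φ (m a b)) * k (φ (m a b)))) ^ 2 := by ring

lemma PrekopaLeindler.smul {α E : Type*} [MeasurableSpace E] {ν : Measure E} {s : Set α}
    {φ : α → E} {m : α → α → α} {w : α → α → ℝ≥0∞} (h : PrekopaLeindler ν s φ m w) (c : ℝ≥0∞) :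
    PrekopaLeindler (c • ν) s φ m w := by
  intro f g k hf hg hk H
  simp only [lintegral_smul_measure, smul_eq_mul]
  calc c * (∫⁻ x, f x ∂ν) * (c * ∫⁻ x, g x ∂ν)
      = c ^ 2 * ((∫⁻ x, f x ∂ν) * ∫⁻ x, g x ∂ν) := by ring
    _ ≤ c ^ 2 * (∫⁻ x, k x ∂ν) ^ 2 := by gcongr; exact h hf hg hk H
    _ = (c * ∫⁻ x, k x ∂ν) ^ 2 := by ring

variable {κ : ℝ}

/-- The weighted Prékopa–Leindler inequality satisfied by the law `ν` of `(|X₁|, …, |Xₙ|)` when `X`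
is unconditional with density `e^{-u}` and `u(x₁^κ, …, xₙ^κ)` is convex. -/
def PowerPrekopaLeindler (κ : ℝ) (ν : Measure (Fin n → ℝ)) : Prop :=
  PrekopaLeindler ν (orthant n) (fun a i ↦ a i ^ κ) (fun a b i ↦ (a i + b i) / 2)
    (fun a b ↦ ∏ i, ENNReal.ofReal (jacobianGain κ (a i) (b i)))

lemma continuousOn_of_convexOn_comp_rpow (hκ : 0 < κ) {u : (Fin n → ℝ) → ℝ}
    (hu : ConvexOn ℝ (orthant n) fun x ↦ u fun i ↦ x i ^ κ) : ContinuousOn u (orthant n) := by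
  have hroot : ContinuousOn (fun (x : Fin n → ℝ) i ↦ x i ^ κ⁻¹) (orthant n) :=
    continuousOn_pi.mpr fun i ↦ (continuous_apply i).continuousOn.rpow_const
      fun x hx ↦ Or.inl (ne_of_gt (hx i (mem_univ i)))
  refine ((hu.continuousOn isOpen_orthant).comp hroot fun x hx ↦ rpow_mem_orthant hx _).congr
    fun x hx ↦ congrArg u (funext fun i ↦ ?_)
  exact (rpow_inv_rpow (le_of_lt (hx i (mem_univ i))) hκ.ne').symm

lemma exp_neg_mul_exp_neg_le_of_convexOn {u : (Fin n → ℝ) → ℝ}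
    (hu : ConvexOn ℝ (orthant n) fun x ↦ u fun i ↦ x i ^ κ) {a b : Fin n → ℝ}
    (ha : a ∈ orthant n) (hb : b ∈ orthant n) :
    exp (-u fun i ↦ a i ^ κ) * exp (-u fun i ↦ b i ^ κ)
      ≤ exp (-u fun i ↦ ((a i + b i) / 2) ^ κ) ^ 2 := by
  have hmid := hu.2 ha hb one_half_pos.le one_half_pos.le (add_halves 1)
  have hcomb : ((1 / 2 : ℝ) • a + (1 / 2 : ℝ) • b) = fun i ↦ (a i + b i) / 2 := by
    funext i
    simp only [Pi.add_apply, Pi.smul_apply, smul_eq_mul]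
    ring
  simp only [hcomb, smul_eq_mul] at hmid
  rw [← exp_add, ← exp_nat_mul, exp_le_exp]
  push_cast
  linarith

theorem powerPrekopaLeindler_map_abs (hκ : 0 < κ) {u : (Fin n → ℝ) → ℝ}
    {μ : Measure (Fin n → ℝ)} (hdens : μ = volume.withDensity fun x ↦ ENNReal.ofReal (exp (-u x)))
    (hμ : IsUnconditional μ) (hu : ConvexOn ℝ (orthant n) fun x ↦ u fun i ↦ x i ^ κ) :
    PowerPrekopaLeindler κ (μ.map fun x i ↦ |x i|) := by
  classical
  set ρ : (Fin n → ℝ) → ℝ≥0∞ := (orthant n).indicator fun x ↦ ENNReal.ofReal (exp (-u x)) with hρ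
  have hρ_meas : Measurable ρ := by
    rw [hρ, ← piecewise_eq_indicator]
    refine ContinuousOn.measurable_piecewise ?_ continuousOn_const measurableSet_orthant
    exact ENNReal.continuous_ofReal.comp_continuousOn
      (continuous_exp.comp_continuousOn (continuousOn_of_convexOn_comp_rpow hκ hu).neg)
  have hrestrict : μ.restrict (orthant n) = (volume.restrict (orthant n)).withDensity ρ := by
    rw [hdens, restrict_withDensity measurableSet_orthant]
    refine withDensity_congr_ae ?_
    filter_upwards [ae_restrict_mem measurableSet_orthant] with x hx
    simp only [hρ, indicator_of_mem hx]
  rw [hμ.map_abs (ae_forall_apply_ne_zero (hdens ▸ withDensity_absolutelyContinuous _ _)),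
    hrestrict]
  refine ((prekopaLeindler_orthant hκ n).withDensity hρ_meas fun a ha b hb ↦ ?_).smul _
  have hab : (fun i ↦ (a i + b i) / 2) ∈ orthant n :=
    fun i hi ↦ mem_Ioi.mpr (half_pos (add_pos (ha i hi) (hb i hi)))
  simp only [hρ, indicator_of_mem (rpow_mem_orthant ha κ), indicator_of_mem (rpow_mem_orthant hb κ),
    indicator_of_mem (rpow_mem_orthant hab κ)]
  rw [← ENNReal.ofReal_mul (exp_nonneg _), ← ENNReal.ofReal_pow (exp_nonneg _)]
  exact ENNReal.ofReal_le_ofReal (exp_neg_mul_exp_neg_le_of_convexOn hu ha hb)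

end Unconditional

section Moments

open scoped ENNReal

section SquaringTail

lemma ofReal_pow_le_add_tsum_layers {Ω : Type*} {Y : Ω → ℝ} {l s : ℝ} (hl : 1 < l)
    (hs : 0 < s) (m : ℕ) (ω : Ω) :
    ENNReal.ofReal (|Y ω| ^ m) ≤ ENNReal.ofReal (s ^ m) + ∑' k : ℕ,
      ENNReal.ofReal ((l ^ (k + 1) * s) ^ m) * {ω | l ^ k * s ≤ |Y ω|}.indicator 1 ω := by
  rcases le_or_gt |Y ω| s with hsmall | hlarge
  · exact (ENNReal.ofReal_le_ofReal (by gcongr)).trans le_self_add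
  · obtain ⟨k, hk, hk'⟩ := exists_nat_pow_near ((one_le_div hs).mpr hlarge.le) hl
    rw [le_div_iff₀ hs] at hk
    rw [div_lt_iff₀ hs] at hk'
    refine le_trans ?_ ((ENNReal.le_tsum k).trans le_add_self)
    rw [indicator_of_mem (by exact hk), Pi.one_apply, mul_one]
    exact ENNReal.ofReal_le_ofReal (by gcongr)

variable {Ω : Type*} [MeasurableSpace Ω] {μ : Measure Ω} {Y : Ω → ℝ} {l s : ℝ}

lemma measure_le_abs_le_of_lintegral_sq (hY : Measurable Y)
    (hsq : ∫⁻ ω, ENNReal.ofReal (Y ω ^ 2) ∂μ ≤ 1) (hs : 0 < s) :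
    μ {ω | s ≤ |Y ω|} ≤ ENNReal.ofReal (1 / s ^ 2) := by
  have hset : {ω | s ≤ |Y ω|} = {ω | ENNReal.ofReal (s ^ 2) ≤ ENNReal.ofReal (Y ω ^ 2)} := by
    ext ω
    simp only [mem_ofPred_eq]
    rw [ENNReal.ofReal_le_ofReal_iff (sq_nonneg _), sq_le_sq, abs_of_pos hs]
  rw [hset, one_div, ENNReal.ofReal_inv_of_pos (by positivity), ← one_div]
  exact (meas_ge_le_lintegral_div (by fun_prop) (by simpa using hs.ne') ENNReal.ofReal_ne_top).trans
    (ENNReal.div_le_div_right hsq _)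

lemma measure_le_abs_le_pow (htail : ∀ r, μ {ω | l * r ≤ |Y ω|} ≤ μ {ω | r ≤ |Y ω|} ^ 2)
    {p : ℝ} (hp0 : 0 ≤ p) (hp1 : p ≤ 1) (hstart : μ {ω | s ≤ |Y ω|} ≤ ENNReal.ofReal p) (k : ℕ) :
    μ {ω | l ^ k * s ≤ |Y ω|} ≤ ENNReal.ofReal (p ^ (k + 1)) := by
  induction k with
  | zero => simpa using hstart
  | succ k ih =>
    calc μ {ω | l ^ (k + 1) * s ≤ |Y ω|} = μ {ω | l * (l ^ k * s) ≤ |Y ω|} := by ring_nf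
      _ ≤ ENNReal.ofReal (p ^ (k + 1)) ^ 2 := (htail _).trans (pow_le_pow_left' ih 2)
      _ = ENNReal.ofReal (p ^ ((k + 1) * 2)) := by
        rw [← ENNReal.ofReal_pow (by positivity), pow_mul]
      _ ≤ ENNReal.ofReal (p ^ (k + 1 + 1)) :=
        ENNReal.ofReal_le_ofReal (pow_le_pow_of_le_one hp0 hp1 (by lia))

lemma lintegral_abs_pow_le_add_tsum_measure [IsProbabilityMeasure μ] (hY : Measurable Y)
    (hl : 1 < l) (hs : 0 < s) (m : ℕ) :
    ∫⁻ ω, ENNReal.ofReal (|Y ω| ^ m) ∂μ ≤ ENNReal.ofReal (s ^ m) + ∑' k : ℕ,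
      ENNReal.ofReal ((l ^ (k + 1) * s) ^ m) * μ {ω | l ^ k * s ≤ |Y ω|} := by
  have hset : ∀ r, MeasurableSet {ω | r ≤ |Y ω|} := fun r ↦ measurableSet_le measurable_const hY.abs
  refine (lintegral_mono fun ω ↦ ofReal_pow_le_add_tsum_layers hl hs m ω).trans_eq ?_
  rw [lintegral_add_left measurable_const, lintegral_const, measure_univ, mul_one,
    lintegral_tsum fun k ↦ ((measurable_one.indicator (hset _)).const_mul _).aemeasurable]
  congr 2 with k
  rw [lintegral_const_mul _ (measurable_one.indicator (hset _)), lintegral_indicator_one (hset _)]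

theorem lintegral_pow_four_le_of_tail [IsProbabilityMeasure μ] (hY : Measurable Y) (hl : 1 < l)
    (htail : ∀ r, μ {ω | l * r ≤ |Y ω|} ≤ μ {ω | r ≤ |Y ω|} ^ 2)
    (hsq : ∫⁻ ω, ENNReal.ofReal (Y ω ^ 2) ∂μ ≤ 1) :
    ∫⁻ ω, ENNReal.ofReal (Y ω ^ 4) ∂μ ≤ ENNReal.ofReal (2 * (2 * l ^ 2) ^ 4) := by
  set s : ℝ := 2 * l ^ 2 with hs
  have hs1 : 1 ≤ s := by nlinarith
  set p : ℝ := 1 / s ^ 2 with hp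
  have hp1 : p ≤ 1 := by rw [hp, div_le_one (by positivity)]; exact one_le_pow₀ hs1
  -- the level `s` is chosen so that the layers decay geometrically with ratio `1 / 4`
  have hratio : l ^ 4 * p = 1 / 4 := by rw [hp, hs]; field_simp; norm_num
  have hlayer : ∀ k : ℕ, ENNReal.ofReal ((l ^ (k + 1) * s) ^ 4) * μ {ω | l ^ k * s ≤ |Y ω|}
      ≤ ENNReal.ofReal (s ^ 4 / 4 * (1 / 4) ^ k) := fun k ↦ by
    have hk := measure_le_abs_le_pow htail (by positivity) hp1
      (measure_le_abs_le_of_lintegral_sq hY hsq (zero_lt_one.trans_le hs1)) k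
    refine (mul_le_mul_right hk _).trans_eq ?_
    rw [← ENNReal.ofReal_mul (by positivity)]
    congr 1
    calc (l ^ (k + 1) * s) ^ 4 * p ^ (k + 1) = s ^ 4 * (l ^ 4 * p) ^ (k + 1) := by ring
      _ = s ^ 4 / 4 * (1 / 4) ^ k := by rw [hratio]; ring
  have hgeom := (hasSum_geometric_of_lt_one (r := (1 / 4 : ℝ)) (by norm_num) (by norm_num)).mul_left
    (s ^ 4 / 4)
  calc ∫⁻ ω, ENNReal.ofReal (Y ω ^ 4) ∂μ = ∫⁻ ω, ENNReal.ofReal (|Y ω| ^ 4) ∂μ := by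
        simp only [(by decide : Even 4).pow_abs]
    _ ≤ ENNReal.ofReal (s ^ 4) + ∑' k : ℕ, ENNReal.ofReal (s ^ 4 / 4 * (1 / 4) ^ k) :=
        (lintegral_abs_pow_le_add_tsum_measure hY hl (zero_lt_one.trans_le hs1) 4).trans
          (add_le_add_right (ENNReal.tsum_le_tsum hlayer) _)
    _ = ENNReal.ofReal (s ^ 4 + s ^ 4 / 4 * (1 - 1 / 4)⁻¹) := by
        rw [← ENNReal.ofReal_tsum_of_nonneg (fun k ↦ by positivity) hgeom.summable, hgeom.tsum_eq,
          ← ENNReal.ofReal_add (by positivity) (by positivity)]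
    _ ≤ ENNReal.ofReal (2 * s ^ 4) :=
        ENNReal.ofReal_le_ofReal (by linarith [show 0 ≤ s ^ 4 by positivity])

end SquaringTail

lemma PrekopaLeindler.measure_le_sq {α E : Type*} [MeasurableSpace E] {ν : Measure E}
    [IsProbabilityMeasure ν] {s : Set α} {φ : α → E} {m : α → α → α} {w : α → α → ℝ≥0∞}
    (h : PrekopaLeindler ν s φ m w) {A B : Set E} (hA : MeasurableSet A) (hB : MeasurableSet B)
    (hw : ∀ a ∈ s, ∀ b ∈ s, 1 ≤ w a b) (hAB : ∀ a ∈ s, ∀ b ∈ s, φ a ∈ A → φ (m a b) ∈ B) :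
    ν A ≤ ν B ^ 2 := by
  have hPL := h (measurable_one.indicator hA) measurable_one (measurable_one.indicator hB)
    fun a ha b hb ↦ ?_
  · simpa [lintegral_indicator_one hA, lintegral_indicator_one hB] using hPL
  by_cases hmem : φ a ∈ A
  · rw [indicator_of_mem hmem, indicator_of_mem (hAB a ha b hb hmem)]
    simpa using one_le_pow₀ (hw a ha b hb)
  · simp [indicator_of_notMem hmem]

variable {κ : ℝ} {n : ℕ} {ν : Measure (Fin n → ℝ)} [IsProbabilityMeasure ν]

lemma one_le_jacobianGain (hκ : 1 ≤ κ) {a b : ℝ} (ha : 0 < a) (hb : 0 < b) :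
    1 ≤ jacobianGain κ a b := by
  refine one_le_rpow ?_ (by linarith)
  rw [le_div_iff₀ (by positivity)]
  linarith [sq_nonneg (a - b)]

lemma PowerPrekopaLeindler.measure_tail_le_sq (hν : PowerPrekopaLeindler κ ν) (hκ : 1 ≤ κ)
    (i : Fin n) (r : ℝ) : ν {x | 2 ^ κ * r ≤ |x i|} ≤ ν {x | r ≤ |x i|} ^ 2 := by
  refine PrekopaLeindler.measure_le_sq hν (measurableSet_le measurable_const (by fun_prop))
    (measurableSet_le measurable_const (by fun_prop)) (fun a ha b hb ↦ ?_)
    fun a ha b hb (hr : 2 ^ κ * r ≤ |a i ^ κ|) ↦ ?_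
  · exact Finset.one_le_prod'' fun j ↦ ENNReal.one_le_ofReal.mpr
      (one_le_jacobianGain hκ (ha j (mem_univ j)) (hb j (mem_univ j)))
  · have hai : 0 < a i := ha i (mem_univ i)
    have hbi : 0 < b i := hb i (mem_univ i)
    change r ≤ |((a i + b i) / 2) ^ κ|
    rw [abs_of_nonneg (by positivity)] at hr ⊢
    calc r ≤ a i ^ κ / 2 ^ κ := (le_div_iff₀' (by positivity)).mpr hr
      _ = (a i / 2) ^ κ := (div_rpow hai.le zero_le_two κ).symm
      _ ≤ ((a i + b i) / 2) ^ κ := by gcongr; linarith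

/-- A bound for the fourth moments of the coordinates of an isotropic vector satisfying the
weighted Prékopa–Leindler inequality with exponent `κ`. -/
noncomputable def fourthMomentBound (κ : ℝ) : ℝ := 2 * (2 * (2 ^ κ) ^ 2) ^ 4

lemma fourthMomentBound_nonneg (κ : ℝ) : 0 ≤ fourthMomentBound κ := by
  unfold fourthMomentBound
  positivity

lemma PowerPrekopaLeindler.lintegral_pow_four_le (hν : PowerPrekopaLeindler κ ν) (hκ : 1 ≤ κ)
    {i : Fin n} (hsq : ∫ x, x i ^ 2 ∂ν = 1) :
    ∫⁻ x, ENNReal.ofReal (x i ^ 4) ∂ν ≤ ENNReal.ofReal (fourthMomentBound κ) := by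
  refine lintegral_pow_four_le_of_tail (measurable_pi_apply i)
    (one_lt_rpow one_lt_two (by linarith)) (hν.measure_tail_le_sq hκ i) ?_
  rw [← ofReal_integral_eq_lintegral_ofReal (integrable_of_integral_eq_one hsq)
    (ae_of_all _ fun x ↦ sq_nonneg _), hsq, ENNReal.ofReal_one]

theorem PowerPrekopaLeindler.integrable_pow_four (hν : PowerPrekopaLeindler κ ν) (hκ : 1 ≤ κ)
    {i : Fin n} (hsq : ∫ x, x i ^ 2 ∂ν = 1) :
    Integrable (fun x ↦ x i ^ 4) ν := by
  refine ⟨((measurable_pi_apply i).pow_const 4).aestronglyMeasurable, ?_⟩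
  rw [hasFiniteIntegral_iff_ofReal (ae_of_all _ fun x ↦ by positivity)]
  exact (hν.lintegral_pow_four_le hκ hsq).trans_lt ENNReal.ofReal_lt_top

theorem PowerPrekopaLeindler.integral_pow_four_le (hν : PowerPrekopaLeindler κ ν) (hκ : 1 ≤ κ)
    {i : Fin n} (hsq : ∫ x, x i ^ 2 ∂ν = 1) :
    ∫ x, x i ^ 4 ∂ν ≤ fourthMomentBound κ := by
  rw [← ENNReal.ofReal_le_ofReal_iff (fourthMomentBound_nonneg κ),
    ofReal_integral_eq_lintegral_ofReal (hν.integrable_pow_four hκ hsq)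
      (ae_of_all _ fun x ↦ by positivity)]
  exact hν.lintegral_pow_four_le hκ hsq

end Moments

section VarianceBound

open Filter Topology
open scoped ENNReal

lemma one_add_add_sq_div_two_sub_le_exp {x : ℝ} (hx : |x| ≤ 1) :
    1 + x + x ^ 2 / 2 - |x| ^ 3 ≤ exp x := by
  have hbound := Real.exp_bound hx (n := 3) (by norm_num)
  simp only [Finset.sum_range_succ, Finset.sum_range_zero, Nat.factorial] at hbound
  have hcube : 0 ≤ |x| ^ 3 := by positivity
  norm_num at hbound
  linarith [(abs_le.mp hbound).1]

section SmallExponentialMoments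

variable {Ω : Type*} [MeasurableSpace Ω] {μ : Measure Ω} [IsProbabilityMeasure μ]
  {T S R : Ω → ℝ} {B B' δ : ℝ}

lemma integrable_exp_mul_of_abs_le_const (hT : Measurable T) (hTB : ∀ ω, |T ω| ≤ B) (s : ℝ) :
    Integrable (fun ω ↦ exp (s * T ω)) μ :=
  integrable_exp_mul_of_mem_Icc hT.aemeasurable (ae_of_all _ fun ω ↦ abs_le.mp (hTB ω))

lemma memLp_of_abs_le_const (hT : Measurable T) (hTB : ∀ ω, |T ω| ≤ B) (p : ℝ≥0∞) :
    MemLp T p μ :=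
  MemLp.of_bound hT.aestronglyMeasurable B (ae_of_all _ hTB)

lemma one_add_variance_sub_le_mgf (hT : Measurable T) (hTB : ∀ ω, |T ω| ≤ B) (hT0 : μ[T] = 0)
    (hδB : |δ| * B ≤ 1) : 1 + δ ^ 2 * Var[T; μ] / 2 - (|δ| * B) ^ 3 ≤ mgf T μ δ := by
  have hTint : Integrable T μ := (memLp_of_abs_le_const hT hTB 1).integrable le_rfl
  have hTsq : Integrable (fun ω ↦ T ω ^ 2) μ := (memLp_of_abs_le_const hT hTB 2).integrable_sq
  have hlin : Integrable (fun ω ↦ 1 + δ * T ω) μ := (integrable_const 1).add (hTint.const_mul δ)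
  have hquad : Integrable (fun ω ↦ 1 + δ * T ω + δ ^ 2 / 2 * T ω ^ 2) μ :=
    hlin.add (hTsq.const_mul _)
  calc 1 + δ ^ 2 * Var[T; μ] / 2 - (|δ| * B) ^ 3
      = ∫ ω, (1 + δ * T ω + δ ^ 2 / 2 * T ω ^ 2 - (|δ| * B) ^ 3) ∂μ := by
        rw [integral_sub hquad (integrable_const _), integral_add hlin (hTsq.const_mul _),
          integral_add (integrable_const 1) (hTint.const_mul δ), integral_const_mul,
          integral_const_mul, hT0, variance_of_integral_eq_zero hT.aemeasurable hT0]
        simp only [integral_const, probReal_univ, smul_eq_mul]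
        ring
    _ ≤ mgf T μ δ := by
        refine integral_mono (hquad.sub (integrable_const _))
          (integrable_exp_mul_of_abs_le_const hT hTB δ) fun ω ↦ ?_
        have hω : |δ * T ω| ≤ |δ| * B := by
          rw [abs_mul]
          exact mul_le_mul_of_nonneg_left (hTB ω) (abs_nonneg δ)
        have hexp := one_add_add_sq_div_two_sub_le_exp (hω.trans hδB)
        have hcube : |δ * T ω| ^ 3 ≤ (|δ| * B) ^ 3 := by gcongr
        linarith [mul_pow δ (T ω) 2]

lemma mgf_le_one_add_integral_add (hR : Measurable R) (hRB : ∀ ω, |R ω| ≤ B')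
    (hδB : |δ| * B' ≤ 1) :
    mgf R μ δ ≤ 1 + δ * μ[R] + (|δ| * B') ^ 2 := by
  have hRint : Integrable R μ := (memLp_of_abs_le_const hR hRB 1).integrable le_rfl
  have hlin : Integrable (fun ω ↦ 1 + δ * R ω) μ := (integrable_const 1).add (hRint.const_mul δ)
  calc mgf R μ δ ≤ ∫ ω, (1 + δ * R ω + (|δ| * B') ^ 2) ∂μ := by
        refine integral_mono (integrable_exp_mul_of_abs_le_const hR hRB δ)
          (hlin.add (integrable_const _)) fun ω ↦ ?_
        have hω : |δ * R ω| ≤ |δ| * B' := by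
          rw [abs_mul]
          exact mul_le_mul_of_nonneg_left (hRB ω) (abs_nonneg δ)
        have hexp := (abs_le.mp (abs_exp_sub_one_sub_id_le (hω.trans hδB))).2
        have hsq : (δ * R ω) ^ 2 ≤ (|δ| * B') ^ 2 := by
          rw [← sq_abs (δ * R ω)]
          gcongr
        change exp (δ * R ω) ≤ 1 + δ * R ω + (|δ| * B') ^ 2
        linarith
    _ = 1 + δ * μ[R] + (|δ| * B') ^ 2 := by
        rw [integral_add hlin (integrable_const _), integral_add (integrable_const 1)
          (hRint.const_mul δ), integral_const_mul]
        simp only [integral_const, probReal_univ, smul_eq_mul, one_mul]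

lemma variance_le_of_mgf_mul_mgf_neg_le_of_small (hT : Measurable T) (hTB : ∀ ω, |T ω| ≤ B)
    (hT0 : μ[T] = 0) (hR : Measurable R) (hRB : ∀ ω, |R ω| ≤ B') (hB : 0 ≤ B) (hδ : 0 < δ)
    (hδB : δ * B ≤ 1) (hδB' : δ ^ 2 * B' ≤ 1)
    (H : mgf T μ δ * mgf T μ (-δ) ≤ mgf R μ (δ ^ 2) ^ 2) :
    Var[T; μ] / 2 ≤ μ[R] + δ * B ^ 3 + δ ^ 2 * B' ^ 2 := by
  have hpos := one_add_variance_sub_le_mgf (μ := μ) hT hTB hT0 (δ := δ) (by rwa [abs_of_pos hδ])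
  have hneg := one_add_variance_sub_le_mgf (μ := μ) hT hTB hT0 (δ := -δ)
    (by rwa [abs_neg, abs_of_pos hδ])
  have hup := mgf_le_one_add_integral_add (μ := μ) hR hRB (δ := δ ^ 2)
    (by rwa [abs_of_pos (pow_pos hδ 2)])
  rw [abs_neg, neg_sq] at hneg
  rw [abs_of_pos hδ] at hpos hneg
  rw [abs_of_pos (pow_pos hδ 2)] at hup
  have hlower : 0 ≤ 1 + δ ^ 2 * Var[T; μ] / 2 - (δ * B) ^ 3 := by
    have hcube : (δ * B) ^ 3 ≤ 1 := pow_le_one₀ (by positivity) hδB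
    have hvar : 0 ≤ δ ^ 2 * Var[T; μ] / 2 := by have := variance_nonneg T μ; positivity
    linarith
  have hsq : (1 + δ ^ 2 * Var[T; μ] / 2 - (δ * B) ^ 3) ^ 2 ≤ mgf R μ (δ ^ 2) ^ 2 := by
    rw [sq (_ - _)]
    exact (mul_le_mul hpos hneg hlower mgf_nonneg).trans H
  have hbound := (abs_le_of_sq_le_sq' hsq mgf_nonneg).2.trans hup
  refine le_of_mul_le_mul_left ?_ (pow_pos hδ 2)
  linarith

lemma eventually_mul_le_one_and_sq_mul_le_one (c k : ℝ) :
    ∀ᶠ δ in 𝓝[>] (0 : ℝ), δ * c ≤ 1 ∧ δ ^ 2 * k ≤ 1 := by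
  have hc : Tendsto (fun δ : ℝ ↦ δ * c) (𝓝 0) (𝓝 0) :=
    Continuous.tendsto' (by fun_prop) 0 0 (by simp)
  have hk : Tendsto (fun δ : ℝ ↦ δ ^ 2 * k) (𝓝 0) (𝓝 0) :=
    Continuous.tendsto' (by fun_prop) 0 0 (by simp)
  exact ((hc.eventually_le_const one_pos).and (hk.eventually_le_const one_pos)).filter_mono
    nhdsWithin_le_nhds

theorem variance_le_two_mul_integral_of_mgf (hS : Measurable S) (hSB : ∀ ω, |S ω| ≤ B)
    (hR : Measurable R) (hRB : ∀ ω, |R ω| ≤ B')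
    (H : ∀ δ, 0 < δ → mgf S μ δ * mgf S μ (-δ) ≤ mgf R μ (δ ^ 2) ^ 2) :
    Var[S; μ] ≤ 2 * μ[R] := by
  set T : Ω → ℝ := fun ω ↦ S ω + -μ[S]
  set D := B + |μ[S]| with hD
  have hT : Measurable T := hS.add_const _
  have hTB : ∀ ω, |T ω| ≤ D := fun ω ↦ by
    calc |T ω| ≤ |S ω| + |-μ[S]| := abs_add_le _ _
      _ ≤ D := by rw [abs_neg, hD]; gcongr; exact hSB ω
  have hD0 : 0 ≤ D :=
    (abs_nonneg _).trans (hTB (Classical.choice (nonempty_of_isProbabilityMeasure μ)))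
  have hT0 : μ[T] = 0 := by
    rw [integral_add ((memLp_of_abs_le_const hS hSB 1).integrable le_rfl) (integrable_const _)]
    simp
  have hmgf : ∀ δ, mgf T μ δ * mgf T μ (-δ) = mgf S μ δ * mgf S μ (-δ) := fun δ ↦ by
    rw [mgf_add_const, mgf_add_const, mul_mul_mul_comm, ← exp_add]
    simp
  have hlim : Tendsto (fun δ ↦ μ[R] + δ * D ^ 3 + δ ^ 2 * B' ^ 2) (𝓝[>] 0) (𝓝 μ[R]) :=
    (Continuous.tendsto' (by fun_prop) 0 _ (by simp)).mono_left nhdsWithin_le_nhds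
  have hhalf : Var[T; μ] / 2 ≤ μ[R] := by
    refine ge_of_tendsto hlim ?_
    filter_upwards [self_mem_nhdsWithin, eventually_mul_le_one_and_sq_mul_le_one D B']
      with δ hδ hδB
    exact variance_le_of_mgf_mul_mgf_neg_le_of_small hT hTB hT0 hR hRB hD0 hδ hδB.1 hδB.2
      ((hmgf δ).trans_le (H δ hδ))
  rw [← variance_add_const hS.aestronglyMeasurable (-μ[S])]
  linarith

end SmallExponentialMoments

end VarianceBound

section TruncatedVariance

open scoped ENNReal

theorem PrekopaLeindler.variance_le {α E : Type*} [MeasurableSpace E] {ν : Measure E}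
    [IsProbabilityMeasure ν] {s : Set α} {φ : α → E} {m : α → α → α} {w : α → α → ℝ≥0∞}
    (h : PrekopaLeindler ν s φ m w) {S R : E → ℝ} {B B' : ℝ} {c : α → α → ℝ}
    (hS : Measurable S) (hSB : ∀ x, |S x| ≤ B) (hR : Measurable R) (hRB : ∀ x, |R x| ≤ B')
    (hc : ∀ a ∈ s, ∀ b ∈ s, ENNReal.ofReal (exp (c a b)) ≤ w a b)
    (H : ∀ δ, 0 < δ → ∀ a ∈ s, ∀ b ∈ s,
      δ * (S (φ a) - S (φ b)) ≤ 2 * (c a b + δ ^ 2 * R (φ (m a b)))) :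
    Var[S; ν] ≤ 2 * ν[R] := by
  refine variance_le_two_mul_integral_of_mgf hS hSB hR hRB fun δ hδ ↦ ?_
  have hmgf : ∀ {f : E → ℝ} {A : ℝ}, Measurable f → (∀ x, |f x| ≤ A) → ∀ r,
      ENNReal.ofReal (mgf f ν r) = ∫⁻ x, ENNReal.ofReal (exp (r * f x)) ∂ν := fun hf hfA r ↦
    ofReal_integral_eq_lintegral_ofReal (integrable_exp_mul_of_abs_le_const hf hfA r)
      (ae_of_all _ fun x ↦ (exp_pos _).le)
  rw [← ENNReal.ofReal_le_ofReal_iff (sq_nonneg _), ENNReal.ofReal_mul mgf_nonneg,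
    ENNReal.ofReal_pow mgf_nonneg, hmgf hS hSB, hmgf hS hSB, hmgf hR hRB]
  refine h (by fun_prop) (by fun_prop) (by fun_prop) fun a ha b hb ↦ ?_
  calc ENNReal.ofReal (exp (δ * S (φ a))) * ENNReal.ofReal (exp (-δ * S (φ b)))
      = ENNReal.ofReal (exp (δ * (S (φ a) - S (φ b)))) := by
        rw [← ENNReal.ofReal_mul (exp_pos _).le, ← exp_add]
        ring_nf
    _ ≤ ENNReal.ofReal (exp (2 * (c a b + δ ^ 2 * R (φ (m a b))))) :=
        ENNReal.ofReal_le_ofReal (exp_le_exp.mpr (H δ hδ a ha b hb))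
    _ = (ENNReal.ofReal (exp (c a b)) * ENNReal.ofReal (exp (δ ^ 2 * R (φ (m a b))))) ^ 2 := by
        rw [← ENNReal.ofReal_mul (exp_pos _).le, ← exp_add, ← ENNReal.ofReal_pow (exp_pos _).le,
          ← exp_nat_mul, Nat.cast_ofNat]
    _ ≤ (w a b * ENNReal.ofReal (exp (δ ^ 2 * R (φ (m a b))))) ^ 2 := by
        gcongr
        exact hc a ha b hb

section OneCoordinate

variable {κ p q a b N : ℝ}

lemma exp_le_jacobianGain (hκ : 1 ≤ κ) (ha : 0 < a) (hb : 0 < b) :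
    exp ((κ - 1) / 2 * (|a - b| / (a + b)) ^ 2) ≤ jacobianGain κ a b := by
  rw [mul_comm, exp_mul]
  refine rpow_le_rpow (exp_pos _).le ?_ (by linarith)
  have hinv : a * b / ((a + b) / 2) ^ 2 ≤ exp (-(|a - b| / (a + b)) ^ 2) := by
    refine le_of_eq_of_le ?_ (add_one_le_exp _)
    rw [div_pow |a - b|, sq_abs]
    field_simp
    ring
  rw [exp_neg] at hinv
  simpa only [inv_inv, inv_div] using inv_anti₀ (by positivity) hinv

lemma rpow_mul_min_rpow_le (hp : 0 ≤ p) (hq0 : 0 ≤ q) (hq1 : q ≤ 1) (ha : 0 ≤ a) (hN : 0 ≤ N) :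
    q ^ p * min (a ^ p) N ≤ min ((q * a) ^ p) N := by
  rw [mul_min_of_nonneg _ _ (rpow_nonneg hq0 p), mul_rpow hq0 ha]
  exact min_le_min_left _ (mul_le_of_le_one_left hN (rpow_le_one hq0 hq1 hp))

lemma min_rpow_le_two_rpow_mul (hp : 0 ≤ p) (ha : 0 ≤ a) (hb : 0 ≤ b) (hN : 0 ≤ N) :
    min (a ^ p) N ≤ 2 ^ p * min (((a + b) / 2) ^ p) N := by
  have hhalf : (2⁻¹ : ℝ) ^ p * min (a ^ p) N ≤ min (((a + b) / 2) ^ p) N :=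
    (rpow_mul_min_rpow_le hp (by norm_num) (by norm_num) ha hN).trans
      (min_le_min_right _ (rpow_le_rpow (by positivity) (by linarith) hp))
  rwa [inv_rpow zero_le_two, inv_mul_le_iff₀ (by positivity)] at hhalf

lemma min_rpow_sub_min_rpow_le (hp : 1 ≤ p) (hb : 0 < b) (hba : b ≤ a) (hN : 0 ≤ N) :
    min (a ^ p) N - min (b ^ p) N ≤ p * (1 - b / a) * min (a ^ p) N := by
  have ha : 0 < a := hb.trans_le hba
  have hmin : (b / a) ^ p * min (a ^ p) N ≤ min (b ^ p) N := by
    simpa only [div_mul_cancel₀ b ha.ne'] using rpow_mul_min_rpow_le (zero_le_one.trans hp)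
      (div_pos hb ha).le ((div_le_one ha).mpr hba) ha.le hN
  have hbernoulli : 1 + p * (b / a - 1) ≤ (b / a) ^ p := by
    simpa only [add_sub_cancel] using
      one_add_mul_self_le_rpow_one_add (by linarith [div_pos hb ha] : -1 ≤ b / a - 1) hp
  have hmul := mul_le_mul_of_nonneg_right hbernoulli (le_min (rpow_nonneg ha.le p) hN)
  linarith

lemma abs_min_rpow_sub_min_rpow_le (hp : 1 ≤ p) (ha : 0 < a) (hb : 0 < b) (hN : 0 ≤ N) :
    |min (a ^ p) N - min (b ^ p) N| ≤
      2 * p * 2 ^ p * (|a - b| / (a + b)) * min (((a + b) / 2) ^ p) N := by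
  wlog hba : b ≤ a generalizing a b
  · simpa only [abs_sub_comm, add_comm] using this hb ha (le_of_not_ge hba)
  have hp0 : 0 ≤ p := zero_le_one.trans hp
  have hratio : 1 - b / a ≤ 2 * ((a - b) / (a + b)) := by
    rw [one_sub_div ha.ne', mul_div_assoc', div_le_div_iff₀ ha (by positivity)]
    nlinarith
  rw [abs_of_nonneg (sub_nonneg.mpr (min_le_min_right _ (rpow_le_rpow hb.le hba hp0))),
    abs_of_nonneg (sub_nonneg.mpr hba)]
  calc min (a ^ p) N - min (b ^ p) N ≤ p * (1 - b / a) * min (a ^ p) N :=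
        min_rpow_sub_min_rpow_le hp hb hba hN
    _ ≤ p * (2 * ((a - b) / (a + b))) * (2 ^ p * min (((a + b) / 2) ^ p) N) := by
        have : 0 ≤ min (a ^ p) N := le_min (rpow_nonneg ha.le p) hN
        have : 0 ≤ a - b := sub_nonneg.mpr hba
        gcongr
        exact min_rpow_le_two_rpow_mul hp0 ha.le hb.le hN
    _ = 2 * p * 2 ^ p * ((a - b) / (a + b)) * min (((a + b) / 2) ^ p) N := by ring

/-- The constant `K` in `Var (∑ αᵢ xᵢ²) ≤ 2 K ∑ αᵢ² E xᵢ⁴`. Its numerator is the square of the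
relative Lipschitz constant of `a ↦ min (a ^ (2 * κ)) N`. -/
noncomputable def varianceConstant (κ : ℝ) : ℝ :=
  (2 * (κ * 2) * 2 ^ (κ * 2)) ^ 2 / (8 * (κ - 1))

lemma varianceConstant_nonneg (hκ : 1 < κ) : 0 ≤ varianceConstant κ :=
  div_nonneg (sq_nonneg _) (by linarith)

lemma mul_min_sq_rpow_sub_le (hκ : 1 < κ) (ha : 0 < a) (hb : 0 < b) (hN : 0 ≤ N) (c : ℝ) :
    c * (min ((a ^ κ) ^ 2) N - min ((b ^ κ) ^ 2) N) ≤
      2 * ((κ - 1) / 2 * (|a - b| / (a + b)) ^ 2 +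
        varianceConstant κ * c ^ 2 * min ((((a + b) / 2) ^ κ) ^ 2) N ^ 2) := by
  have hlip := abs_min_rpow_sub_min_rpow_le (p := κ * (2 : ℕ)) (by norm_num; linarith) ha hb hN
  rw [rpow_mul_natCast ha.le, rpow_mul_natCast hb.le,
    rpow_mul_natCast (by positivity : 0 ≤ (a + b) / 2), Nat.cast_ofNat] at hlip
  unfold varianceConstant
  set r := |a - b| / (a + b)
  set M := min ((((a + b) / 2) ^ κ) ^ 2) N
  set L := 2 * (κ * 2) * 2 ^ (κ * 2)
  have hκ' : 0 < κ - 1 := by linarith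
  have hamgm : 0 ≤ ((κ - 1) * r - |c| * L * M / 2) ^ 2 / (κ - 1) := by positivity
  calc c * (min ((a ^ κ) ^ 2) N - min ((b ^ κ) ^ 2) N) ≤ |c| * (L * r * M) := by
        refine (le_abs_self _).trans ?_
        rw [abs_mul]
        gcongr
    _ ≤ |c| * (L * r * M) + ((κ - 1) * r - |c| * L * M / 2) ^ 2 / (κ - 1) := by linarith
    _ = 2 * ((κ - 1) / 2 * r ^ 2 + L ^ 2 / (8 * (κ - 1)) * c ^ 2 * M ^ 2) := by
        rw [← sq_abs c]
        field_simp
        ring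

end OneCoordinate

variable {κ : ℝ} {n : ℕ} {ν : Measure (Fin n → ℝ)}

lemma abs_sum_mul_min_sq_le (α x : Fin n → ℝ) {N : ℝ} (hN : 0 ≤ N) :
    |∑ i, α i * min (x i ^ 2) N| ≤ ∑ i, |α i| * min (x i ^ 2) N := by
  refine (Finset.abs_sum_le_sum_abs _ _).trans_eq (Finset.sum_congr rfl fun i _ ↦ ?_)
  rw [abs_mul, abs_of_nonneg (le_min (sq_nonneg _) hN)]

theorem PowerPrekopaLeindler.variance_sum_mul_min_sq_le [IsProbabilityMeasure ν]
    (hν : PowerPrekopaLeindler κ ν) (hκ : 1 < κ) (α : Fin n → ℝ) {N : ℝ} (hN : 0 ≤ N) :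
    Var[fun x ↦ ∑ i, α i * min (x i ^ 2) N; ν] ≤
      2 * ∫ x, varianceConstant κ * ∑ i, α i ^ 2 * min (x i ^ 2) N ^ 2 ∂ν := by
  have hK := varianceConstant_nonneg hκ
  refine PrekopaLeindler.variance_le hν (B := ∑ i, |α i| * N)
    (B' := varianceConstant κ * ∑ i, α i ^ 2 * N ^ 2)
    (c := fun a b ↦ ∑ i, (κ - 1) / 2 * (|a i - b i| / (a i + b i)) ^ 2)
    (by fun_prop) (fun x ↦ ?_) (by fun_prop) (fun x ↦ ?_) (fun a ha b hb ↦ ?_)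
    fun δ _ a ha b hb ↦ ?_
  · refine (abs_sum_mul_min_sq_le α x hN).trans ?_
    gcongr
    exact min_le_right _ _
  · rw [abs_of_nonneg (mul_nonneg hK (Finset.sum_nonneg fun i _ ↦ by positivity))]
    gcongr
    exact min_le_right _ _
  · rw [exp_sum, ENNReal.ofReal_prod_of_nonneg fun i _ ↦ (exp_pos _).le]
    exact Finset.prod_le_prod' fun i _ ↦
      ENNReal.ofReal_le_ofReal (exp_le_jacobianGain hκ.le (ha i trivial) (hb i trivial))
  · calc δ * (∑ i, α i * min ((a i ^ κ) ^ 2) N - ∑ i, α i * min ((b i ^ κ) ^ 2) N)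
        = ∑ i, δ * α i * (min ((a i ^ κ) ^ 2) N - min ((b i ^ κ) ^ 2) N) := by
          rw [← Finset.sum_sub_distrib, Finset.mul_sum]
          exact Finset.sum_congr rfl fun i _ ↦ by ring
      _ ≤ ∑ i, 2 * ((κ - 1) / 2 * (|a i - b i| / (a i + b i)) ^ 2 + varianceConstant κ *
            (δ * α i) ^ 2 * min ((((a i + b i) / 2) ^ κ) ^ 2) N ^ 2) :=
          Finset.sum_le_sum fun i _ ↦
            mul_min_sq_rpow_sub_le hκ (ha i trivial) (hb i trivial) hN (δ * α i)
      _ = _ := by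
          rw [← Finset.mul_sum, Finset.sum_add_distrib, Finset.mul_sum, Finset.mul_sum]
          congr 2
          exact Finset.sum_congr rfl fun i _ ↦ by ring

end TruncatedVariance

section Variance

open Filter Topology

lemma tendsto_variance_of_dominated {Ω : Type*} [MeasurableSpace Ω] {μ : Measure Ω}
    [IsProbabilityMeasure μ] {F : ℕ → Ω → ℝ} {f g : Ω → ℝ}
    (hF : ∀ N, AEStronglyMeasurable (F N) μ) (hg : MemLp g 2 μ) (hFg : ∀ N ω, |F N ω| ≤ g ω)
    (hlim : ∀ ω, Tendsto (fun N ↦ F N ω) atTop (𝓝 (f ω))) :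
    Tendsto (fun N ↦ Var[F N; μ]) atTop (𝓝 Var[f; μ]) := by
  have hFL2 : ∀ N, MemLp (F N) 2 μ := fun N ↦ hg.of_le (hF N)
    (ae_of_all _ fun ω ↦ (hFg N ω).trans (le_abs_self _))
  have hfL2 : MemLp f 2 μ := hg.of_le
    (aestronglyMeasurable_of_tendsto_ae atTop hF (ae_of_all _ hlim))
    (ae_of_all _ fun ω ↦
      (le_of_tendsto' (hlim ω).abs fun N ↦ hFg N ω).trans (le_abs_self _))
  simp only [variance_eq_sub (hFL2 _), variance_eq_sub hfL2]
  refine Tendsto.sub (tendsto_integral_of_dominated_convergence (fun ω ↦ g ω ^ 2)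
    (fun N ↦ (hFL2 N).integrable_sq.aestronglyMeasurable) hg.integrable_sq
    (fun N ↦ ae_of_all _ fun ω ↦ ?_) (ae_of_all _ fun ω ↦ (hlim ω).pow 2))
    ((tendsto_integral_of_dominated_convergence g hF (hg.integrable one_le_two)
      (fun N ↦ ae_of_all _ (hFg N)) (ae_of_all _ hlim)).pow 2)
  rw [Pi.pow_apply, Real.norm_eq_abs, abs_pow]
  gcongr
  exact hFg N ω

variable {κ : ℝ} {n : ℕ} {ν : Measure (Fin n → ℝ)} [IsProbabilityMeasure ν]

lemma PowerPrekopaLeindler.memLp_sq (hν : PowerPrekopaLeindler κ ν) (hκ : 1 ≤ κ) {i : Fin n}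
    (hsq : ∫ x, x i ^ 2 ∂ν = 1) : MemLp (fun x ↦ x i ^ 2) 2 ν := by
  rw [memLp_two_iff_integrable_sq (by fun_prop : Measurable _).aestronglyMeasurable]
  simpa only [← pow_mul] using hν.integrable_pow_four hκ hsq

lemma tendsto_sum_mul_min_sq (α x : Fin n → ℝ) :
    Tendsto (fun N : ℕ ↦ ∑ i, α i * min (x i ^ 2) N) atTop (𝓝 (∑ i, α i * x i ^ 2)) := by
  refine tendsto_finsetSum _ fun i _ ↦ Tendsto.const_mul _ (tendsto_const_nhds.congr' ?_)
  filter_upwards [eventually_ge_atTop ⌈x i ^ 2⌉₊] with N hN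
  rw [min_eq_left (Nat.ceil_le.mp hN)]

lemma PowerPrekopaLeindler.integral_sum_mul_min_sq_sq_le (hν : PowerPrekopaLeindler κ ν)
    (hκ : 1 ≤ κ) (hsq : ∀ i, ∫ x, x i ^ 2 ∂ν = 1) (α : Fin n → ℝ) {N : ℝ} (hN : 0 ≤ N) :
    ∫ x, ∑ i, α i ^ 2 * min (x i ^ 2) N ^ 2 ∂ν ≤ fourthMomentBound κ * ∑ i, α i ^ 2 := by
  have hint : ∀ i, Integrable (fun x ↦ α i ^ 2 * x i ^ 4) ν := fun i ↦
    (hν.integrable_pow_four hκ (hsq i)).const_mul _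
  calc ∫ x, ∑ i, α i ^ 2 * min (x i ^ 2) N ^ 2 ∂ν ≤ ∫ x, ∑ i, α i ^ 2 * x i ^ 4 ∂ν := by
        refine integral_mono_of_nonneg
          (ae_of_all _ fun x ↦ Finset.sum_nonneg fun i _ ↦ by positivity)
          (integrable_finsetSum _ fun i _ ↦ hint i)
          (ae_of_all _ fun x ↦ Finset.sum_le_sum fun i _ ↦ ?_)
        rw [show x i ^ 4 = (x i ^ 2) ^ 2 by ring]
        gcongr
        exact min_le_left _ _
    _ = ∑ i, α i ^ 2 * ∫ x, x i ^ 4 ∂ν := by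
        rw [integral_finsetSum _ fun i _ ↦ hint i]
        exact Finset.sum_congr rfl fun i _ ↦ integral_const_mul _ _
    _ ≤ ∑ i, α i ^ 2 * fourthMomentBound κ := by
        gcongr with i
        exact hν.integral_pow_four_le hκ (hsq i)
    _ = fourthMomentBound κ * ∑ i, α i ^ 2 := by rw [← Finset.sum_mul, mul_comm]

theorem PowerPrekopaLeindler.variance_sum_mul_sq_le (hν : PowerPrekopaLeindler κ ν) (hκ : 1 < κ)
    (hsq : ∀ i, ∫ x, x i ^ 2 ∂ν = 1) (α : Fin n → ℝ) :
    Var[fun x ↦ ∑ i, α i * x i ^ 2; ν] ≤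
      2 * (varianceConstant κ * (fourthMomentBound κ * ∑ i, α i ^ 2)) := by
  have hdom : MemLp (fun x : Fin n → ℝ ↦ ∑ i, |α i| * x i ^ 2) 2 ν :=
    memLp_finsetSum _ fun i _ ↦ (hν.memLp_sq hκ.le (hsq i)).const_mul _
  have hle : ∀ (N : ℕ) (x : Fin n → ℝ),
      |∑ i, α i * min (x i ^ 2) (N : ℝ)| ≤ ∑ i, |α i| * x i ^ 2 := fun N x ↦
    (abs_sum_mul_min_sq_le α x N.cast_nonneg).trans (by
      gcongr
      exact min_le_left _ _)
  have hlim : Tendsto (fun N : ℕ ↦ Var[fun x : Fin n → ℝ ↦ ∑ i, α i * min (x i ^ 2) (N : ℝ); ν])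
      atTop (𝓝 Var[fun x ↦ ∑ i, α i * x i ^ 2; ν]) :=
    tendsto_variance_of_dominated (fun N ↦ (by fun_prop : Measurable _).aestronglyMeasurable)
      hdom hle (tendsto_sum_mul_min_sq α)
  refine le_of_tendsto' hlim fun N ↦ (hν.variance_sum_mul_min_sq_le hκ α N.cast_nonneg).trans ?_
  rw [integral_const_mul]
  have := varianceConstant_nonneg hκ
  gcongr
  exact hν.integral_sum_mul_min_sq_sq_le hκ.le hsq α N.cast_nonneg

end Variance

section Main

open scoped BigOperators

lemma abs_rademacherTail_sub_gaussianTail_div_sqrt_le {ι : Type*} [Fintype ι] [DecidableEq ι]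
    (a : ι → ℝ) (t : ℝ) :
    |rademacherTail a t - gaussianTail (t / √(∑ i, a i ^ 2))| ≤
      288 * ∑ i, |a i| ^ 3 + 4 * (∑ i, a i ^ 2 - 1) ^ 2 := by
  set s := ∑ i, a i ^ 2 with hs
  have hcubes : 0 ≤ ∑ i, |a i| ^ 3 := Finset.sum_nonneg fun i _ ↦ by positivity
  rcases le_or_gt (1 / 2) s with hlarge | hsmall
  · have hcube : 1 / 3 ≤ √s ^ 3 := by
      calc (1 : ℝ) / 3 ≤ (7 / 10) ^ 3 := by norm_num
        _ ≤ √s ^ 3 := by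
          gcongr
          exact le_sqrt_of_sq_le (by norm_num; linarith)
    have hBE := berryEsseen_rademacher (sqrt_pos.mpr (by linarith))
      (hs.symm.trans (sq_sqrt (by linarith)).symm) t
    calc |rademacherTail a t - gaussianTail (t / √s)|
        ≤ 96 * (∑ i, |a i| ^ 3) / √s ^ 3 := hBE
      _ ≤ 96 * (∑ i, |a i| ^ 3) / (1 / 3) := by gcongr
      _ ≤ 288 * ∑ i, |a i| ^ 3 + 4 * (s - 1) ^ 2 := by linarith [sq_nonneg (s - 1)]
  · have htrivial : |rademacherTail a t - gaussianTail (t / √s)| ≤ 1 := by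
      rw [abs_le]
      constructor <;> linarith [rademacherTail_nonneg a t, rademacherTail_le_one a t,
        gaussianTail_nonneg (t / √s), gaussianTail_le_one (t / √s)]
    nlinarith

theorem abs_rademacherTail_sub_gaussianTail_sub_le {ι : Type*} [Fintype ι] [DecidableEq ι]
    (a : ι → ℝ) (t : ℝ) :
    |rademacherTail a t - gaussianTail t - t * γ t / 2 * (∑ i, a i ^ 2 - 1)| ≤
      288 * ∑ i, |a i| ^ 3 + 11 * (∑ i, a i ^ 2 - 1) ^ 2 := by
  set s := ∑ i, a i ^ 2
  calc |rademacherTail a t - gaussianTail t - t * γ t / 2 * (s - 1)|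
      = |(rademacherTail a t - gaussianTail (t / √s)) +
          (gaussianTail (t / √s) - gaussianTail t - t * γ t / 2 * (s - 1))| := by ring_nf
    _ ≤ 288 * ∑ i, |a i| ^ 3 + 4 * (s - 1) ^ 2 + 7 * (s - 1) ^ 2 :=
        (abs_add_le _ _).trans (add_le_add (abs_rademacherTail_sub_gaussianTail_div_sqrt_le a t)
          (abs_gaussianTail_div_sqrt_sub_le t s))
    _ = 288 * ∑ i, |a i| ^ 3 + 11 * (s - 1) ^ 2 := by ring

section ThirdMoment

variable {Ω : Type*} [MeasurableSpace Ω] {μ : Measure Ω} {Y : Ω → ℝ}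

lemma abs_pow_three_le (y : ℝ) : |y| ^ 3 ≤ (y ^ 2 + y ^ 4) / 2 := by
  rw [← sq_abs y, show y ^ 4 = |y| ^ 4 by rw [Even.pow_abs (by decide)]]
  nlinarith [mul_nonneg (sq_nonneg |y|) (sq_nonneg (|y| - 1))]

lemma integrable_abs_pow_three (hY : AEStronglyMeasurable Y μ)
    (hsq : Integrable (fun ω ↦ Y ω ^ 2) μ) (hfour : Integrable (fun ω ↦ Y ω ^ 4) μ) :
    Integrable (fun ω ↦ |Y ω| ^ 3) μ :=
  ((hsq.add hfour).div_const 2).mono' (hY.norm.pow 3) (ae_of_all _ fun ω ↦ by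
    rw [Real.norm_eq_abs, abs_of_nonneg (by positivity)]
    exact abs_pow_three_le (Y ω))

lemma integral_abs_pow_three_le (hsq : Integrable (fun ω ↦ Y ω ^ 2) μ)
    (hfour : Integrable (fun ω ↦ Y ω ^ 4) μ) :
    ∫ ω, |Y ω| ^ 3 ∂μ ≤ (∫ ω, Y ω ^ 2 ∂μ + ∫ ω, Y ω ^ 4 ∂μ) / 2 := by
  rw [← integral_add hsq hfour, ← integral_div]
  exact integral_mono_of_nonneg (ae_of_all _ fun ω ↦ by positivity)
    ((hsq.add hfour).div_const 2) (ae_of_all _ fun ω ↦ abs_pow_three_le (Y ω))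

end ThirdMoment

variable {n : ℕ} {μ : Measure (Fin n → ℝ)} {θ : Fin n → ℝ} {κ : ℝ}

lemma measurableSet_le_sum_mul (θ : Fin n → ℝ) (t : ℝ) :
    MeasurableSet {x : Fin n → ℝ | t ≤ ∑ i, θ i * x i} :=
  measurableSet_le measurable_const (by fun_prop)

lemma setOf_le_rademacherSum_mul (θ : Fin n → ℝ) (t : ℝ) (ε : Fin n → ℤˣ) :
    {x : Fin n → ℝ | t ≤ rademacherSum (fun i ↦ θ i * x i) ε} =
      (fun x i ↦ ((ε i : ℤ) : ℝ) * x i) ⁻¹' {x | t ≤ ∑ i, θ i * x i} := by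
  ext x
  simp only [rademacherSum, mem_ofPred_eq, mem_preimage, mul_assoc, mul_comm (x _)]

lemma measurableSet_le_rademacherSum_mul (θ : Fin n → ℝ) (t : ℝ) (ε : Fin n → ℤˣ) :
    MeasurableSet {x : Fin n → ℝ | t ≤ rademacherSum (fun i ↦ θ i * x i) ε} := by
  rw [setOf_le_rademacherSum_mul]
  exact measurableSet_le_sum_mul θ t |>.preimage (by fun_prop)

lemma rademacherTail_mul_eq_expect_indicator (θ : Fin n → ℝ) (t : ℝ) (x : Fin n → ℝ) :
    rademacherTail (fun i ↦ θ i * x i) t =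
      𝔼 ε, {x : Fin n → ℝ | t ≤ rademacherSum (fun i ↦ θ i * x i) ε}.indicator 1 x :=
  Finset.expect_congr rfl fun ε _ ↦ by simp [indicator_apply]

lemma integrable_rademacherTail [IsFiniteMeasure μ] (θ : Fin n → ℝ) (t : ℝ) :
    Integrable (fun x ↦ rademacherTail (fun i ↦ θ i * x i) t) μ := by
  simp_rw [rademacherTail_mul_eq_expect_indicator, Fintype.expect_eq_sum_div_card]
  exact (integrable_finsetSum _ fun ε _ ↦ (integrable_const (1 : ℝ)).indicator
    (measurableSet_le_rademacherSum_mul θ t ε)).div_const _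

lemma IsUnconditional.integral_rademacherTail [IsFiniteMeasure μ] (hμ : IsUnconditional μ)
    (θ : Fin n → ℝ) (t : ℝ) :
    ∫ x, rademacherTail (fun i ↦ θ i * x i) t ∂μ = μ.real {x | t ≤ ∑ i, θ i * x i} := by
  have hind : ∀ ε : Fin n → ℤˣ, Integrable ({x : Fin n → ℝ |
      t ≤ rademacherSum (fun i ↦ θ i * x i) ε}.indicator (1 : (Fin n → ℝ) → ℝ)) μ :=
    fun ε ↦ (integrable_const 1).indicator (measurableSet_le_rademacherSum_mul θ t ε)
  have hmeas : ∀ ε : Fin n → ℤˣ,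
      μ.real {x : Fin n → ℝ | t ≤ rademacherSum (fun i ↦ θ i * x i) ε} =
        μ.real {x | t ≤ ∑ i, θ i * x i} := fun ε ↦ by
    conv_rhs => rw [← hμ ε]
    rw [map_measureReal_apply (by fun_prop) (measurableSet_le_sum_mul θ t),
      setOf_le_rademacherSum_mul]
  simp_rw [rademacherTail_mul_eq_expect_indicator, Fintype.expect_eq_sum_div_card]
  rw [integral_div, integral_finsetSum _ fun ε _ ↦ hind ε]
  simp_rw [integral_indicator_one (measurableSet_le_rademacherSum_mul θ t _), hmeas]
  rw [← Fintype.expect_eq_sum_div_card, Fintype.expect_const]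

lemma memLp_sum_sq_mul_sq (hL2 : ∀ i, MemLp (fun x ↦ x i ^ 2) 2 μ) (θ : Fin n → ℝ) :
    MemLp (fun x ↦ ∑ i, θ i ^ 2 * x i ^ 2) 2 μ :=
  memLp_finsetSum _ fun i _ ↦ (hL2 i).const_mul _

lemma integral_sum_sq_mul_sq [IsFiniteMeasure μ]
    (hL2 : ∀ i, MemLp (fun x ↦ x i ^ 2) 2 μ) (hsq : ∀ i, ∫ x, x i ^ 2 ∂μ = 1)
    (hθ : ∑ i, θ i ^ 2 = 1) :
    ∫ x, ∑ i, θ i ^ 2 * x i ^ 2 ∂μ = 1 := by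
  rw [integral_finsetSum _ fun i _ ↦ ((hL2 i).integrable one_le_two).const_mul _]
  simp_rw [integral_const_mul, hsq, mul_one, hθ]

-- The linear term of the expansion has mean zero, since `∑ θᵢ² xᵢ²` has mean one.
lemma IsUnconditional.integral_rademacherTail_sub_gaussianTail_sub
    [IsProbabilityMeasure μ] (hμ : IsUnconditional μ)
    (hL2 : ∀ i, MemLp (fun x ↦ x i ^ 2) 2 μ) (hsq : ∀ i, ∫ x, x i ^ 2 ∂μ = 1)
    (hθ : ∑ i, θ i ^ 2 = 1) (t : ℝ) :
    ∫ x, (rademacherTail (fun i ↦ θ i * x i) t - gaussianTail t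
      - t * γ t / 2 * (∑ i, θ i ^ 2 * x i ^ 2 - 1)) ∂μ =
        μ.real {x | t ≤ ∑ i, θ i * x i} - gaussianTail t := by
  have hV : Integrable (fun x ↦ ∑ i, θ i ^ 2 * x i ^ 2) μ :=
    (memLp_sum_sq_mul_sq hL2 θ).integrable one_le_two
  have hR := integrable_rademacherTail (μ := μ) θ t
  have hRsub : Integrable (fun x ↦ rademacherTail (fun i ↦ θ i * x i) t - gaussianTail t) μ :=
    hR.sub (integrable_const _)
  have hVsub : Integrable (fun x ↦ ∑ i, θ i ^ 2 * x i ^ 2 - 1) μ := hV.sub (integrable_const 1)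
  rw [integral_sub hRsub (hVsub.const_mul _), integral_sub hR (integrable_const _),
    integral_const_mul, integral_sub hV (integrable_const 1), hμ.integral_rademacherTail,
    integral_sum_sq_mul_sq hL2 hsq hθ]
  simp

theorem IsUnconditional.abs_measureReal_sub_gaussianTail_le_of_memLp
    [IsProbabilityMeasure μ] (hμ : IsUnconditional μ)
    (hL2 : ∀ i, MemLp (fun x ↦ x i ^ 2) 2 μ) (hsq : ∀ i, ∫ x, x i ^ 2 ∂μ = 1)
    (hθ : ∑ i, θ i ^ 2 = 1) (t : ℝ) :
    |μ.real {x | t ≤ ∑ i, θ i * x i} - gaussianTail t| ≤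
      288 * ∑ i, |θ i| ^ 3 * ∫ x, |x i| ^ 3 ∂μ + 11 * Var[fun x ↦ ∑ i, θ i ^ 2 * x i ^ 2; μ] := by
  have hcube : ∀ i, Integrable (fun x ↦ |θ i| ^ 3 * |x i| ^ 3) μ := fun i ↦
    (integrable_abs_pow_three (measurable_pi_apply i).aestronglyMeasurable
      ((hL2 i).integrable one_le_two)
      (by simpa only [← pow_mul] using (hL2 i).integrable_sq)).const_mul _
  have hVL2 := memLp_sum_sq_mul_sq hL2 θ
  have hVsq : Integrable (fun x ↦ 11 * (∑ i, θ i ^ 2 * x i ^ 2 - 1) ^ 2) μ :=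
    (hVL2.sub (memLp_const 1)).integrable_sq.const_mul 11
  have hcubes : Integrable (fun x ↦ 288 * ∑ i, |θ i| ^ 3 * |x i| ^ 3) μ :=
    (integrable_finsetSum _ fun i _ ↦ hcube i).const_mul _
  rw [← hμ.integral_rademacherTail_sub_gaussianTail_sub hL2 hsq hθ t]
  calc |∫ x, (rademacherTail (fun i ↦ θ i * x i) t - gaussianTail t
          - t * γ t / 2 * (∑ i, θ i ^ 2 * x i ^ 2 - 1)) ∂μ|
      ≤ ∫ x, (288 * ∑ i, |θ i| ^ 3 * |x i| ^ 3
          + 11 * (∑ i, θ i ^ 2 * x i ^ 2 - 1) ^ 2) ∂μ := by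
        rw [← Real.norm_eq_abs]
        refine norm_integral_le_of_norm_le (hcubes.add hVsq) (ae_of_all _ fun x ↦ ?_)
        simpa only [Real.norm_eq_abs, mul_pow, abs_mul] using
          abs_rademacherTail_sub_gaussianTail_sub_le (fun i ↦ θ i * x i) t
    _ = 288 * ∑ i, |θ i| ^ 3 * ∫ x, |x i| ^ 3 ∂μ
          + 11 * ∫ x, (∑ i, θ i ^ 2 * x i ^ 2 - 1) ^ 2 ∂μ := by
        rw [integral_add hcubes hVsq, integral_const_mul, integral_const_mul,
          integral_finsetSum _ fun i _ ↦ hcube i]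
        simp only [integral_const_mul]
    _ = _ := by
        rw [variance_eq_integral hVL2.aemeasurable, integral_sum_sq_mul_sq hL2 hsq hθ]

lemma sum_sq_sq_le_sum_abs_pow_three (hθ : ∑ i, θ i ^ 2 = 1) :
    ∑ i, (θ i ^ 2) ^ 2 ≤ ∑ i, |θ i| ^ 3 := by
  refine Finset.sum_le_sum fun i _ ↦ ?_
  have hle : |θ i| ≤ 1 := by
    rw [← sq_le_one_iff_abs_le_one, ← hθ]
    exact Finset.single_le_sum (fun j _ ↦ sq_nonneg (θ j)) (Finset.mem_univ i)
  rw [← sq_abs (θ i), ← pow_mul]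
  exact pow_le_pow_of_le_one (abs_nonneg _) hle (by norm_num)

/-- The constant `C_κ` of the Berry–Esseen bound. -/
noncomputable def berryEsseenConstant (κ : ℝ) : ℝ :=
  144 * (1 + fourthMomentBound κ) + 22 * (varianceConstant κ * fourthMomentBound κ)

lemma berryEsseenConstant_pos (hκ : 1 < κ) : 0 < berryEsseenConstant κ := by
  have := fourthMomentBound_nonneg κ
  have := varianceConstant_nonneg hκ
  rw [berryEsseenConstant]
  positivity

lemma integral_pow_map_abs {k : ℕ} (hk : Even k) (i : Fin n) :
    ∫ x, x i ^ k ∂(μ.map fun x i ↦ |x i|) = ∫ x, x i ^ k ∂μ := by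
  rw [integral_map (by fun_prop : Measurable _).aemeasurable
    (by fun_prop : Measurable _).aestronglyMeasurable]
  simp only [hk.pow_abs]

theorem IsUnconditional.abs_measureReal_sub_gaussianTail_le [IsProbabilityMeasure μ]
    (hμ : IsUnconditional μ) (hκ : 1 < κ) (hμabs : PowerPrekopaLeindler κ (μ.map fun x i ↦ |x i|))
    (hsq : ∀ i, ∫ x, x i ^ 2 ∂μ = 1) (hθ : ∑ i, θ i ^ 2 = 1) (t : ℝ) :
    |μ.real {x | t ≤ ∑ i, θ i * x i} - gaussianTail t| ≤
      berryEsseenConstant κ * ∑ i, |θ i| ^ 3 := by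
  have habs : Measurable fun (x : Fin n → ℝ) i ↦ |x i| := by fun_prop
  set ν := μ.map fun x i ↦ |x i|
  have : IsProbabilityMeasure ν := Measure.isProbabilityMeasure_map habs.aemeasurable
  have hνsq : ∀ i, ∫ x, x i ^ 2 ∂ν = 1 := fun i ↦
    (integral_pow_map_abs even_two i).trans (hsq i)
  have hL2 : ∀ i, MemLp (fun x ↦ x i ^ 2) 2 μ := fun i ↦ by
    simpa only [Function.comp_def, sq_abs] using
      (hμabs.memLp_sq hκ.le (hνsq i)).comp_of_map habs.aemeasurable
  have hfour : ∀ i, ∫ x, x i ^ 4 ∂μ ≤ fourthMomentBound κ := fun i ↦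
    (integral_pow_map_abs (by decide : Even 4) i).symm.trans_le
      (hμabs.integral_pow_four_le hκ.le (hνsq i))
  have hthree : ∀ i, ∫ x, |x i| ^ 3 ∂μ ≤ (1 + fourthMomentBound κ) / 2 := fun i ↦ by
    have h := integral_abs_pow_three_le ((hL2 i).integrable one_le_two)
      (by simpa only [← pow_mul] using (hL2 i).integrable_sq)
    linarith [hsq i, hfour i]
  have hvar : Var[fun x ↦ ∑ i, θ i ^ 2 * x i ^ 2; μ] ≤
      2 * (varianceConstant κ * (fourthMomentBound κ * ∑ i, (θ i ^ 2) ^ 2)) := by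
    have h := hμabs.variance_sum_mul_sq_le hκ hνsq fun i ↦ θ i ^ 2
    rw [variance_map (by fun_prop : Measurable _).aemeasurable habs.aemeasurable] at h
    simpa only [Function.comp_def, sq_abs] using h
  have := fourthMomentBound_nonneg κ
  have := varianceConstant_nonneg hκ
  calc |μ.real {x | t ≤ ∑ i, θ i * x i} - gaussianTail t|
      ≤ 288 * ∑ i, |θ i| ^ 3 * ∫ x, |x i| ^ 3 ∂μ
          + 11 * Var[fun x ↦ ∑ i, θ i ^ 2 * x i ^ 2; μ] :=
        hμ.abs_measureReal_sub_gaussianTail_le_of_memLp hL2 hsq hθ t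
    _ ≤ 288 * ∑ i, |θ i| ^ 3 * ((1 + fourthMomentBound κ) / 2)
          + 11 * (2 * (varianceConstant κ * (fourthMomentBound κ * ∑ i, |θ i| ^ 3))) := by
        gcongr with i
        · exact hthree i
        · exact hvar.trans (by grw [sum_sq_sq_le_sum_abs_pow_three hθ])
    _ = berryEsseenConstant κ * ∑ i, |θ i| ^ 3 := by
        rw [← Finset.sum_mul, berryEsseenConstant]
        ring

end Main

end UnconditionalCLT

/-- Berry-Esseen type theorem for unconditional isotropic random vectors whose density
`e^{-u}` satisfies that `u(x₁^κ, …, xₙ^κ)` is convex on the positive orthant. -/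
theorem clt_unconditional (κ : ℝ) (hκ : 1 < κ) :
    ∃ C : ℝ, 0 < C ∧
      ∀ (n : ℕ) (Ω : Type) [MeasureSpace Ω] [IsProbabilityMeasure (ℙ : Measure Ω)]
        (X : Ω → Fin n → ℝ) (u : (Fin n → ℝ) → ℝ),
        Measurable X →
        -- X has density e^{-u(x)}
        Measure.map X ℙ = (volume : Measure (Fin n → ℝ)).withDensity
          (fun x => ENNReal.ofReal (Real.exp (-u x))) →
        -- X is unconditional
        (∀ ε : Fin n → ℝ, (∀ i, ε i = 1 ∨ ε i = -1) →
          Measure.map (fun ω => fun i => ε i * X ω i) ℙ = Measure.map X ℙ) →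
        -- X is isotropic
        (∀ i, ∫ ω, X ω i ∂ℙ = 0) →
        (∀ i j, ∫ ω, X ω i * X ω j ∂ℙ = if i = j then 1 else 0) →
        -- u(x₁^κ, …, xₙ^κ) is convex on the positive orthant
        ConvexOn ℝ {x : Fin n → ℝ | ∀ i, 0 ≤ x i} (fun x => u (fun i => x i ^ κ)) →
        ∀ θ : Fin n → ℝ, (∑ k, (θ k) ^ 2) = 1 →
        ∀ t : ℝ,
          |(ℙ {ω | t ≤ ∑ k, θ k * X ω k}).toReal
              - ((gaussianReal 0 1) {x | t ≤ x}).toReal|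
            ≤ C * ∑ k, |θ k| ^ 3 := by
  refine ⟨UnconditionalCLT.berryEsseenConstant κ, UnconditionalCLT.berryEsseenConstant_pos hκ, ?_⟩
  intro n Ω _ _ X u hX hdens hsigns _ hcov hconv θ hθ t
  have : IsProbabilityMeasure (Measure.map X ℙ) := Measure.isProbabilityMeasure_map hX.aemeasurable
  have huncond : UnconditionalCLT.IsUnconditional (Measure.map X ℙ) := fun ε ↦ by
    rw [Measure.map_map (by fun_prop) hX]
    exact hsigns _ fun i ↦ (Int.units_eq_one_or (ε i)).imp (by simp [·]) (by simp [·])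
  have hsq : ∀ i, ∫ x, x i ^ 2 ∂(Measure.map X ℙ) = 1 := fun i ↦ by
    rw [integral_map hX.aemeasurable (by fun_prop : Measurable _).aestronglyMeasurable]
    simpa only [← sq, if_true] using hcov i i
  have hPL := UnconditionalCLT.powerPrekopaLeindler_map_abs (zero_lt_one.trans hκ) hdens huncond
    (hconv.subset (fun x hx i ↦ le_of_lt (hx i (Set.mem_univ i)))
      UnconditionalCLT.convex_orthant)
  have hmain := huncond.abs_measureReal_sub_gaussianTail_le hκ hPL hsq hθ t
  rwa [map_measureReal_apply hX (UnconditionalCLT.measurableSet_le_sum_mul θ t)] at hmain
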